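/- Fix s ∈ ℂ with Re s > 0 and let x > 0 be real. Then ∑_{n=1}^∞ σ_s(n) n^{−1/2} e^{−2π√(2nx)} sin(π/4 − 2π√(2nx)) = 4π( (√x/2)·ζ(−s) + ζ(1/2)ζ(1/2−s)/(4π√2) + Γ(s+1/2)ζ(−s)/(2^{s+3} π^{s+3/2} x^{s+1/2}) ) + Γ(s+1/2)/(2^s π^{s+1/2}) · { ∑_{1≤n<x} σ_s(n) n^{−s−1/2} [ −sin(π/4 − πs/2) + (n^{s+1/2}/(2 x^{s+1/2}))·( (1+in/x)^{−(s+1/2)} + (1−in/x)^{−(s+1/2)} ) ] + (1/2) ∑_{n≥x} σ_s(n) n^{−s−1/2} [ cos(π/4+πs/2)·( (1+ix/n)^{−(s+1/2)} + (1−ix/n)^{−(s+1/2)} − 2 ) + i·sin(π/4+πs/2)·( (1+ix/n)^{−(s+1/2)} − (1−ix/n)^{−(s+1/2)} ) ] }. -/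

import Mathlib

open Complex Finset
open scoped Real BigOperators Classical

/-- Generalized divisor sum `σ_s(n) = ∑_{d ∣ n} d^s` with complex exponent. -/
noncomputable def csigma (s : ℂ) (n : ℕ) : ℂ := ∑ d ∈ n.divisors, (d : ℂ) ^ s

/-!
Put `ν = s + 1/2`. The function `S(a) = ∑ k^{-1/2} e^{-a√k} sin(π/4 - a√k)` of `a > 0` satisfies
the reciprocity `√2 S(a) = ∑ d^{-1/2} (e^{-a²/(4πd)} - 1) + a + ζ(1/2)`. Take `a = 2π√(2kx)`,
multiply by `k^{ν-1}`, where `-1 < Re ν < -1/2`, and sum over `k`. Interchanging the sums over `k`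
and `d` turns the double series into `∑ d^{-1/2} R_ν(x/d)`, up to a zeta value, where `R_ν(y)` is
`∑ k^{ν-1} e^{-2πky}` less the terms `Γ(ν) (2πy)^{-ν} + ζ(1-ν)` of its expansion at `y = 0`. The
resulting identity continues analytically to `Re ν > 0`, where Lipschitz's formula gives
`R_ν(y) = Γ(ν) (2π)^{-ν} ∑_m [(y+im)^{-ν} + (y-im)^{-ν} - (im)^{-ν} - (-im)^{-ν}]`.
Grouping the pairs `(d, m)`, and on the other side the pairs of indices in `∑ k^{ν-1} S(2π√(2kx))`,
by their product `n` produces the divisor sums. The powers of `x ± in` are written in terms of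
`1 ± in/x` for `n < x` and, after a rotation by `∓i`, in terms of `1 ∓ ix/n` for `n ≥ x`.
-/

open MeasureTheory Filter Topology FourierTransform

section ComplexPowers

variable {ν : ℂ} {r v y : ℝ}

lemma ofReal_mul_cpow (hr : 0 < r) (z w : ℂ) : ((r : ℂ) * z) ^ w = (r : ℂ) ^ w * z ^ w := by
  rcases eq_or_ne z 0 with rfl | hz
  · rcases eq_or_ne w 0 with rfl | hw
    · simp
    · simp [zero_cpow hw]
  · have hr' : (r : ℂ) ≠ 0 := ofReal_ne_zero.2 hr.ne'
    rw [cpow_def_of_ne_zero (mul_ne_zero hr' hz), cpow_def_of_ne_zero hr', cpow_def_of_ne_zero hz,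
      Complex.log_ofReal_mul hr hz, ofReal_log hr.le, ← Complex.exp_add, add_mul]

lemma norm_natCast_add_one_cpow (n : ℕ) (w : ℂ) :
    ‖((n : ℂ) + 1) ^ w‖ = ((n : ℝ) + 1) ^ w.re := by
  exact_mod_cast norm_natCast_cpow_of_pos n.succ_pos w

lemma norm_cpow_le_rpow_mul_exp (z w : ℂ) : ‖z ^ w‖ ≤ ‖z‖ ^ w.re * Real.exp (π * |w.im|) := by
  refine (norm_cpow_le z w).trans ?_
  rw [div_eq_mul_inv, ← Real.exp_neg]
  gcongr
  calc -(z.arg * w.im) ≤ |z.arg| * |w.im| := (neg_le_abs _).trans (abs_mul _ _).le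
    _ ≤ π * |w.im| := by gcongr; exact abs_arg_le_pi z

lemma add_I_mul_mem_slitPlane (hv : v ≠ 0) : (y + I * v : ℂ) ∈ slitPlane := by
  simp [mem_slitPlane_iff, hv]

lemma sub_I_mul_eq (y v : ℝ) : (y - I * v : ℂ) = y + I * (-v : ℝ) := by push_cast; ring

lemma norm_add_I_mul_cpow_neg_le (hν : 0 ≤ ν.re) (hv : v ≠ 0) (y : ℝ) :
    ‖(y + I * v : ℂ) ^ (-ν)‖ ≤ |v| ^ (-ν.re) * Real.exp (π * |ν.im|) := by
  refine (norm_cpow_le_rpow_mul_exp _ _).trans ?_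
  rw [neg_re, neg_im, abs_neg]
  gcongr ?_ * _
  refine Real.rpow_le_rpow_of_nonpos (abs_pos.2 hv) ?_ (neg_nonpos.2 hν)
  simpa using abs_im_le_norm (y + I * v : ℂ)

lemma hasDerivAt_add_I_mul_cpow_neg (ν : ℂ) (hv : v ≠ 0) (y : ℝ) :
    HasDerivAt (fun y : ℝ ↦ (y + I * v : ℂ) ^ (-ν)) (-ν * (y + I * v : ℂ) ^ (-(ν + 1))) y := by
  have h := (((hasDerivAt_id (y : ℂ)).add_const (I * (v : ℂ))).cpow_const (c := -ν)
    (add_I_mul_mem_slitPlane hv)).comp_ofReal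
  simpa [sub_eq_neg_add] using h

/-- The symmetric sum `(y + iv)^{-ν} + (y - iv)^{-ν}` of conjugate powers, in which the Lipschitz
summation formula and the finite and infinite sums of Ramanujan's formula are expressed. -/
noncomputable def conjCpowSum (ν : ℂ) (y v : ℝ) : ℂ := (y + I * v) ^ (-ν) + (y - I * v) ^ (-ν)

lemma norm_conjCpowSum_le (hν : 0 ≤ ν.re) (hv : 0 < v) (y : ℝ) :
    ‖conjCpowSum ν y v‖ ≤ 2 * (v ^ (-ν.re) * Real.exp (π * |ν.im|)) := by
  have h₁ := norm_add_I_mul_cpow_neg_le hν hv.ne' y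
  have h₂ := norm_add_I_mul_cpow_neg_le hν (neg_ne_zero.2 hv.ne') y
  rw [abs_of_pos hv] at h₁
  rw [abs_neg, abs_of_pos hv, ← sub_I_mul_eq] at h₂
  rw [two_mul]
  exact norm_add_le_of_le h₁ h₂

lemma hasDerivAt_conjCpowSum (ν : ℂ) (hv : v ≠ 0) (y : ℝ) :
    HasDerivAt (fun y ↦ conjCpowSum ν y v) (-ν * conjCpowSum (ν + 1) y v) y := by
  have h := (hasDerivAt_add_I_mul_cpow_neg ν hv y).add
    (hasDerivAt_add_I_mul_cpow_neg ν (neg_ne_zero.2 hv) y)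
  simp only [← sub_I_mul_eq, ← mul_add] at h
  exact h

lemma conjCpowSum_mul (hr : 0 < r) (ν : ℂ) (y v : ℝ) :
    conjCpowSum ν (r * y) (r * v) = (r : ℂ) ^ (-ν) * conjCpowSum ν y v := by
  have h₁ : (r * y : ℝ) + I * (r * v : ℝ) = (r : ℂ) * (y + I * v) := by push_cast; ring
  have h₂ : (r * y : ℝ) - I * (r * v : ℝ) = (r : ℂ) * (y - I * v) := by push_cast; ring
  rw [conjCpowSum, conjCpowSum, h₁, h₂, ofReal_mul_cpow hr, ofReal_mul_cpow hr, mul_add]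

lemma I_cpow (w : ℂ) : I ^ w = cexp (π / 2 * I * w) := by
  rw [cpow_def_of_ne_zero I_ne_zero, log_I]

lemma neg_I_cpow (w : ℂ) : (-I) ^ w = cexp (-(π / 2) * I * w) := by
  rw [cpow_def_of_ne_zero (neg_ne_zero.2 I_ne_zero), log_neg_I]

lemma conjCpowSum_zero_left (ν : ℂ) (hv : 0 < v) :
    conjCpowSum ν 0 v = 2 * Complex.cos (π * ν / 2) * (v : ℂ) ^ (-ν) := by
  rw [conjCpowSum, ofReal_zero, zero_add, zero_sub, ← neg_mul, mul_comm I, mul_comm (-I),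
    ofReal_mul_cpow hv, ofReal_mul_cpow hv, I_cpow, neg_I_cpow, Complex.two_cos]
  ring_nf

lemma differentiable_conjCpowSum (y : ℝ) (hv : v ≠ 0) :
    Differentiable ℂ fun ν ↦ conjCpowSum ν y v := by
  have h : ∀ v : ℝ, v ≠ 0 → Differentiable ℂ fun ν : ℂ ↦ (y + I * v : ℂ) ^ (-ν) := fun v hv ↦
    differentiable_neg.const_cpow (.inl (slitPlane_ne_zero (add_I_mul_mem_slitPlane hv)))
  simp only [conjCpowSum, sub_I_mul_eq]
  exact (h v hv).add (h (-v) (neg_ne_zero.2 hv))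

lemma norm_conjCpowSum_sub_le (hν : -1 ≤ ν.re) (hy : 0 ≤ y) (hv : 0 < v) :
    ‖conjCpowSum ν y v - conjCpowSum ν 0 v‖ ≤
      2 * ‖ν‖ * Real.exp (π * |ν.im|) * v ^ (-(ν.re + 1)) * y := by
  have h := norm_image_sub_le_of_norm_deriv_le_segment' (f := fun y ↦ conjCpowSum ν y v)
    (C := 2 * ‖ν‖ * Real.exp (π * |ν.im|) * v ^ (-(ν.re + 1)))
    (fun x _ ↦ (hasDerivAt_conjCpowSum ν hv.ne' x).hasDerivWithinAt) (fun x _ ↦ ?_) y ⟨hy, le_rfl⟩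
  · simpa using h
  · have hbound := norm_conjCpowSum_le (ν := ν + 1) (by simp; linarith) hv x
    simp only [add_re, one_re, add_im, one_im, add_zero] at hbound
    rw [norm_mul, norm_neg]
    calc ‖ν‖ * ‖conjCpowSum (ν + 1) x v‖
        ≤ ‖ν‖ * (2 * (v ^ (-(ν.re + 1)) * Real.exp (π * |ν.im|))) := by gcongr
      _ = _ := by ring

/-- The second-order Taylor remainder of `y ↦ conjCpowSum ν y v` at `y = 0`. -/
noncomputable def conjCpowSumRemainder (ν : ℂ) (y v : ℝ) : ℂ :=
  conjCpowSum ν y v - conjCpowSum ν 0 v + ν * y * conjCpowSum (ν + 1) 0 v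

lemma differentiable_conjCpowSumRemainder (y : ℝ) (hv : v ≠ 0) :
    Differentiable ℂ fun ν ↦ conjCpowSumRemainder ν y v :=
  ((differentiable_conjCpowSum y hv).sub (differentiable_conjCpowSum 0 hv)).add
    ((differentiable_id.mul_const _).mul
      ((differentiable_conjCpowSum 0 hv).comp (differentiable_id.add_const 1)))

lemma norm_conjCpowSumRemainder_le (hν : -2 ≤ ν.re) (hy : 0 ≤ y) (hv : 0 < v) :
    ‖conjCpowSumRemainder ν y v‖ ≤
      2 * ‖ν‖ * ‖ν + 1‖ * Real.exp (π * |ν.im|) * v ^ (-(ν.re + 2)) * y ^ 2 := by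
  have hderiv (x : ℝ) : HasDerivAt (fun y ↦ conjCpowSumRemainder ν y v)
      (-ν * (conjCpowSum (ν + 1) x v - conjCpowSum (ν + 1) 0 v)) x := by
    convert! ((hasDerivAt_conjCpowSum ν hv.ne' x).sub_const _).add
      ((ofRealCLM.hasDerivAt.const_mul ν).mul_const _) using 1
    simp
    ring
  have h := norm_image_sub_le_of_norm_deriv_le_segment' (f := fun y ↦ conjCpowSumRemainder ν y v)
    (C := 2 * ‖ν‖ * ‖ν + 1‖ * Real.exp (π * |ν.im|) * v ^ (-(ν.re + 2)) * y)
    (fun x _ ↦ (hderiv x).hasDerivWithinAt) (fun x hx ↦ ?_) y ⟨hy, le_rfl⟩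
  · simpa [conjCpowSumRemainder, pow_two, mul_assoc] using h
  · have hbound := norm_conjCpowSum_sub_le (ν := ν + 1) (by simp; linarith) hx.1 hv
    simp only [add_re, one_re, add_im, one_im, add_zero, add_assoc, one_add_one_eq_two] at hbound
    rw [norm_mul, norm_neg]
    calc ‖ν‖ * ‖conjCpowSum (ν + 1) x v - conjCpowSum (ν + 1) 0 v‖
        ≤ ‖ν‖ * (2 * ‖ν + 1‖ * Real.exp (π * |ν.im|) * v ^ (-(ν.re + 2)) * y) := by
          gcongr
          refine hbound.trans ?_
          gcongr
          exact hx.2.le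
      _ = _ := by ring

end ComplexPowers

section LaplaceTransform

lemma eqOn_re_pos_of_forall_ofReal {F G : ℂ → ℂ} (hF : DifferentiableOn ℂ F {c | 0 < c.re})
    (hG : DifferentiableOn ℂ G {c | 0 < c.re}) (h : ∀ r : ℝ, 0 < r → F r = G r) :
    Set.EqOn F G {c | 0 < c.re} := by
  have hopen : IsOpen {c : ℂ | 0 < c.re} := isOpen_lt continuous_const continuous_re
  refine (hF.analyticOnNhd hopen).eqOn_of_preconnected_of_frequently_eq (hG.analyticOnNhd hopen)
    (convex_halfSpace_re_gt 0).isPreconnected (z₀ := ((1 : ℝ) : ℂ)) (by simp) ?_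
  have hlim : Tendsto ((↑) : ℝ → ℂ) (𝓝[≠] 1) (𝓝[≠] ((1 : ℝ) : ℂ)) :=
    continuous_ofReal.continuousWithinAt.tendsto_nhdsWithin fun r hr ↦ by simpa using hr
  have hev : ∀ᶠ r : ℝ in 𝓝[≠] 1, F r = G r :=
    (eventually_nhdsWithin_of_eventually_nhds (lt_mem_nhds one_pos)).mono h
  exact hlim.frequently hev.frequently

lemma mul_exp_neg_mul_le {ε t w : ℝ} (hε : 0 < ε) (ht : 0 ≤ t) (hw : 2 * ε ≤ w) :
    t * Real.exp (-(w * t)) ≤ ε⁻¹ * Real.exp (-(ε * t)) := by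
  have hlin : ε * t ≤ Real.exp (ε * t) := by linarith [Real.add_one_le_exp (ε * t)]
  calc t * Real.exp (-(w * t)) ≤ t * Real.exp (-(ε * t) + -(ε * t)) := by
        gcongr
        nlinarith
    _ = ε⁻¹ * (ε * t * Real.exp (-(ε * t))) * Real.exp (-(ε * t)) := by
        rw [Real.exp_add]
        field_simp
    _ ≤ ε⁻¹ * (Real.exp (ε * t) * Real.exp (-(ε * t))) * Real.exp (-(ε * t)) := by gcongr
    _ = ε⁻¹ * Real.exp (-(ε * t)) := by rw [← Real.exp_add, add_neg_cancel, Real.exp_zero, mul_one]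

variable {g : ℝ → ℂ}

lemma aestronglyMeasurable_mul_cexp_neg_mul
    (hg : ∀ ε : ℝ, 0 < ε → IntegrableOn (fun t ↦ g t * cexp (-(ε * t))) (Set.Ioi 0)) (c : ℂ) :
    AEStronglyMeasurable (fun t : ℝ ↦ g t * cexp (-(c * t))) (volume.restrict (Set.Ioi 0)) := by
  have hexp : AEStronglyMeasurable (fun t : ℝ ↦ cexp (-((c - 1) * t)))
      (volume.restrict (Set.Ioi 0)) := Continuous.aestronglyMeasurable (by fun_prop)
  refine ((hg 1 one_pos).aestronglyMeasurable.mul hexp).congr (.of_forall fun t ↦ ?_)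
  simp only [Pi.mul_apply]
  rw [mul_assoc, ← Complex.exp_add]
  congr 2
  push_cast
  ring

lemma differentiableOn_laplace
    (hg : ∀ ε : ℝ, 0 < ε → IntegrableOn (fun t ↦ g t * cexp (-(ε * t))) (Set.Ioi 0)) :
    DifferentiableOn ℂ (fun c ↦ ∫ t in Set.Ioi (0 : ℝ), g t * cexp (-(c * t)))
      {c | 0 < c.re} := by
  intro c (hc : 0 < c.re)
  have hmeas := aestronglyMeasurable_mul_cexp_neg_mul hg
  have hnorm (z : ℂ) (t : ℝ) : ‖g t * cexp (-(z * t))‖ = ‖g t‖ * Real.exp (-(z.re * t)) := by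
    simp [Complex.norm_exp]
  obtain ⟨ε, hε, hεc⟩ : ∃ ε : ℝ, 0 < ε ∧ 2 * ε < c.re :=
    ⟨c.re / 4, by positivity, by linarith⟩
  refine (hasDerivAt_integral_of_dominated_loc_of_deriv_le (s := {z : ℂ | 2 * ε < z.re})
    (F' := fun z t ↦ -(t : ℂ) * (g t * cexp (-(z * t))))
    (bound := fun t ↦ ε⁻¹ * ‖g t * cexp (-(ε * t))‖)
    ((isOpen_lt continuous_const continuous_re).mem_nhds hεc) (.of_forall hmeas) ?_
    ((Continuous.aestronglyMeasurable (by fun_prop)).mul (hmeas c)) ?_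
    ((hg ε hε).norm.const_mul _) ?_).2.differentiableAt.differentiableWithinAt
  · refine Integrable.mono (hg c.re hc) (hmeas c) (.of_forall fun t ↦ ?_)
    rw [hnorm, hnorm, ofReal_re]
  · filter_upwards [ae_restrict_mem measurableSet_Ioi] with t (ht : 0 < t) z hz
    rw [norm_mul, norm_neg, norm_real, Real.norm_of_nonneg ht.le, hnorm, hnorm, ofReal_re,
      mul_left_comm, mul_left_comm ε⁻¹]
    exact mul_le_mul_of_nonneg_left (mul_exp_neg_mul_le hε ht.le hz.le) (norm_nonneg _)
  · refine .of_forall fun t z _ ↦ ?_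
    convert! ((((hasDerivAt_id z).mul_const (t : ℂ)).neg).cexp).const_mul (g t) using 1
    simp
    ring

lemma integral_cpow_mul_cexp_neg_mul_Ioi {a c : ℂ} (ha : 0 < a.re) (hc : 0 < c.re) :
    ∫ t in Set.Ioi (0 : ℝ), (t : ℂ) ^ (a - 1) * cexp (-(c * t)) = Gamma a * c ^ (-a) := by
  refine eqOn_re_pos_of_forall_ofReal (F := fun c ↦ ∫ t in Set.Ioi (0 : ℝ), _)
    (G := fun c ↦ Gamma a * c ^ (-a)) (differentiableOn_laplace fun ε hε ↦ ?_)
    (fun z hz ↦ ?_) (fun r hr ↦ ?_) hc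
  · have h : IntegrableOn (fun t : ℝ ↦ t ^ (a.re - 1) * Real.exp (-ε * t)) (Set.Ioi 0) := by
      simpa using integrableOn_rpow_mul_exp_neg_mul_rpow (s := a.re - 1) (by linarith) one_pos hε
    refine h.mono' (Measurable.aestronglyMeasurable (by fun_prop)) ?_
    filter_upwards [ae_restrict_mem measurableSet_Ioi] with t (ht : 0 < t)
    rw [norm_mul, norm_cpow_eq_rpow_re_of_pos ht, Complex.norm_exp]
    simp
  · exact ((differentiableAt_id.cpow_const (.inl hz)).const_mul _).differentiableWithinAt
  · rw [integral_cpow_mul_exp_neg_mul_Ioi ha hr, mul_comm, cpow_neg, one_div, inv_cpow]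
    simpa [arg_ofReal_of_nonneg hr.le] using Real.pi_pos.ne

end LaplaceTransform

section OneSidedPoisson

variable {f : ℝ → ℂ}

lemma fourier_eq_integral_Ioi (hf : ∀ t ≤ 0, f t = 0) (ξ : ℝ) :
    𝓕 f ξ = ∫ t in Set.Ioi (0 : ℝ), f t * cexp (-(2 * π * I * ξ * t)) := by
  rw [Real.fourier_real_eq_integral_exp_smul, ← setIntegral_eq_integral_of_forall_compl_eq_zero
    (s := Set.Ioi 0) fun t ht ↦ by rw [hf t (not_lt.1 ht), smul_zero]]
  refine setIntegral_congr_fun measurableSet_Ioi fun t _ ↦ ?_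
  rw [smul_eq_mul, mul_comm]
  congr 2
  push_cast
  ring

lemma tsum_int_eq_tsum_nat_add_one {f : ℤ → ℂ} (hf : ∀ n ≤ 0, f n = 0) :
    ∑' n : ℤ, f n = ∑' k : ℕ, f (k + 1) := by
  refine (Function.Injective.tsum_eq (g := fun k : ℕ ↦ (k : ℤ) + 1)
    (fun a b h ↦ by simpa using h) fun n hn ↦ ?_).symm
  have hpos : 0 < n := not_le.1 fun h ↦ hn (hf n h)
  exact ⟨(n - 1).toNat, by simp only; lia⟩

theorem tsum_add_one_eq_tsum_fourier (hc : Continuous f) (hf : ∀ t ≤ 0, f t = 0) {b : ℝ}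
    (hb : 1 < b) (hdecay : f =O[atTop] fun t ↦ |t| ^ (-b))
    (hpos : Summable fun m : ℕ ↦ 𝓕 f ((m : ℝ) + 1))
    (hneg : Summable fun m : ℕ ↦ 𝓕 f (-((m : ℝ) + 1))) :
    ∑' k : ℕ, f ((k : ℝ) + 1) =
      𝓕 f 0 + ∑' m : ℕ, (𝓕 f ((m : ℝ) + 1) + 𝓕 f (-((m : ℝ) + 1))) := by
  have hcocompact : f =O[cocompact ℝ] fun t ↦ |t| ^ (-b) := by
    rw [cocompact_eq_atBot_atTop, Asymptotics.isBigO_sup]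
    refine ⟨.of_bound 0 ?_, hdecay⟩
    filter_upwards [eventually_le_atBot 0] with t ht
    simp [hf t ht]
  have hpos' : Summable fun m : ℕ ↦ (fun n : ℤ ↦ 𝓕 f n) (m + 1) := by simpa using hpos
  have hneg' : Summable fun m : ℕ ↦ (fun n : ℤ ↦ 𝓕 f n) (-(m + 1)) := by
    simpa only [Int.cast_neg, Int.cast_add, Int.cast_natCast, Int.cast_one] using hneg
  have hpoisson := Real.tsum_eq_tsum_fourier_of_rpow_decay_of_summable hc hb hcocompact
    (.of_add_one_of_neg_add_one hpos' hneg') 0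
  have hleft : ∑' n : ℤ, f n = ∑' k : ℕ, f ((k : ℝ) + 1) := by
    rw [tsum_int_eq_tsum_nat_add_one (f := fun n : ℤ ↦ f n) fun n hn ↦ hf n (mod_cast hn)]
    simp
  have hright := tsum_of_add_one_of_neg_add_one (f := fun n : ℤ ↦ 𝓕 f n) hpos' hneg'
  simp only [Int.cast_neg, Int.cast_add, Int.cast_natCast, Int.cast_one, Int.cast_zero] at hright
  simp only [zero_add, QuotientAddGroup.mk_zero, fourier_eval_zero, mul_one] at hpoisson
  rw [← hleft, hpoisson, hright, hpos.tsum_add hneg]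
  ring

end OneSidedPoisson

section ShiftedSeries

lemma summable_add_one_rpow {a : ℝ} (ha : a < -1) : Summable fun n : ℕ ↦ ((n : ℝ) + 1) ^ a := by
  simpa using (summable_nat_add_iff 1).2 (Real.summable_nat_rpow.2 ha)

lemma summable_rpow_mul_exp_neg_mul_sqrt (a : ℝ) {c : ℝ} (hc : 0 < c) :
    Summable fun k : ℕ ↦ ((k : ℝ) + 1) ^ a * Real.exp (-(c * √((k : ℝ) + 1))) := by
  have hexp : (fun t : ℝ ↦ Real.exp (-c * √t)) =O[atTop] fun t ↦ √t ^ (2 * (-2 - a)) :=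
    ((isLittleO_exp_neg_mul_rpow_atTop hc _).comp_tendsto Real.tendsto_sqrt_atTop).isBigO
  have hbigO : (fun t : ℝ ↦ t ^ a * Real.exp (-c * √t)) =O[atTop] fun t ↦ t ^ (-2 : ℝ) := by
    refine ((Asymptotics.isBigO_refl (fun t : ℝ ↦ t ^ a) atTop).mul hexp).congr' .rfl ?_
    filter_upwards [eventually_gt_atTop 0] with t ht
    rw [Real.sqrt_eq_rpow, ← Real.rpow_mul ht.le, ← Real.rpow_add ht]
    congr 1
    ring
  have hsum := summable_of_isBigO_nat (Real.summable_nat_rpow.2 (by norm_num : (-2 : ℝ) < -1))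
    (hbigO.comp_tendsto tendsto_natCast_atTop_atTop)
  simpa using (summable_nat_add_iff 1).2 hsum

lemma summable_rpow_mul_exp_neg_mul (a : ℝ) {c : ℝ} (hc : 0 < c) :
    Summable fun k : ℕ ↦ ((k : ℝ) + 1) ^ a * Real.exp (-(c * ((k : ℝ) + 1))) := by
  refine (summable_rpow_mul_exp_neg_mul_sqrt a hc).of_nonneg_of_le (fun k ↦ by positivity)
    fun k ↦ ?_
  have hsqrt : √((k : ℝ) + 1) ≤ (k : ℝ) + 1 :=
    Real.sqrt_le_iff.2 ⟨by positivity, by nlinarith [k.cast_nonneg (α := ℝ)]⟩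
  gcongr

lemma summable_conjCpowSum {μ : ℂ} (hμ : 1 < μ.re) (y : ℝ) :
    Summable fun m : ℕ ↦ conjCpowSum μ y (m + 1) := by
  refine .of_norm_bounded (((summable_add_one_rpow (neg_lt_neg hμ)).mul_right _).mul_left 2)
    fun m ↦ norm_conjCpowSum_le (by linarith) (by positivity) y

end ShiftedSeries

section LipschitzFormula

variable {μ : ℂ} {y : ℝ}

/-- The function `t ↦ t^{μ - 1} e^{-2πyt}` on `t > 0`, extended by zero, to which Poisson summation
is applied to obtain the Lipschitz formula. -/
noncomputable def lipschitzKernel (μ : ℂ) (y t : ℝ) : ℂ :=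
  ((max t 0 : ℝ) : ℂ) ^ (μ - 1) * cexp (-(2 * π * y * t))

lemma continuous_lipschitzKernel (hμ : 1 < μ.re) (y : ℝ) : Continuous (lipschitzKernel μ y) :=
  ((continuous_ofReal_cpow_const (by simpa using hμ)).comp
    (continuous_id.max continuous_const)).mul (by fun_prop)

lemma lipschitzKernel_of_nonpos (hμ : 1 < μ.re) (y : ℝ) {t : ℝ} (ht : t ≤ 0) :
    lipschitzKernel μ y t = 0 := by
  have hne : μ - 1 ≠ 0 := sub_ne_zero.2 fun h ↦ by simp [h] at hμ
  simp [lipschitzKernel, max_eq_right ht, zero_cpow hne]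

lemma lipschitzKernel_of_nonneg (μ : ℂ) (y : ℝ) {t : ℝ} (ht : 0 ≤ t) :
    lipschitzKernel μ y t = (t : ℂ) ^ (μ - 1) * cexp (-(2 * π * y * t)) := by
  rw [lipschitzKernel, max_eq_left ht]

lemma lipschitzKernel_isBigO (μ : ℂ) (hy : 0 < y) :
    lipschitzKernel μ y =O[atTop] fun t ↦ |t| ^ (-2 : ℝ) := by
  have hexp := (isLittleO_exp_neg_mul_rpow_atTop (a := 2 * π * y) (by positivity)
    (-2 - (μ.re - 1))).isBigO
  refine Asymptotics.IsBigO.trans (.of_norm_eventuallyLE ?_)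
    (((Asymptotics.isBigO_refl (fun t : ℝ ↦ t ^ (μ.re - 1)) atTop).mul hexp).congr' .rfl ?_)
  · filter_upwards [eventually_gt_atTop 0] with t ht
    rw [lipschitzKernel_of_nonneg μ y ht.le, norm_mul, norm_cpow_eq_rpow_re_of_pos ht,
      Complex.norm_exp]
    simp
  · filter_upwards [eventually_gt_atTop 0] with t ht
    rw [← Real.rpow_add ht, abs_of_pos ht]
    congr 1
    ring

lemma fourier_lipschitzKernel (hμ : 1 < μ.re) (hy : 0 < y) (ξ : ℝ) :
    𝓕 (lipschitzKernel μ y) ξ = Gamma μ * (2 * π) ^ (-μ) * (y + I * ξ) ^ (-μ) := by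
  have hpow : ((2 * π : ℝ) * (y + I * ξ) : ℂ) ^ (-μ) = (2 * π) ^ (-μ) * (y + I * ξ) ^ (-μ) := by
    rw [ofReal_mul_cpow Real.two_pi_pos]
    push_cast
    rfl
  rw [fourier_eq_integral_Ioi fun t ↦ lipschitzKernel_of_nonpos hμ y, mul_assoc (Gamma μ), ← hpow,
    ← integral_cpow_mul_cexp_neg_mul_Ioi (by linarith)
      (by simpa using mul_pos Real.two_pi_pos hy)]
  refine setIntegral_congr_fun measurableSet_Ioi fun t (ht : 0 < t) ↦ ?_
  rw [lipschitzKernel_of_nonneg μ y ht.le, mul_assoc, ← Complex.exp_add]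
  congr 2
  push_cast
  ring

lemma summable_add_I_mul_cpow_neg (hμ : 1 < μ.re) (y : ℝ) {v : ℕ → ℝ}
    (hv : ∀ m, |v m| = m + 1) : Summable fun m ↦ (y + I * v m : ℂ) ^ (-μ) := by
  refine .of_norm_bounded ((summable_add_one_rpow (neg_lt_neg hμ)).mul_right _) fun m ↦
    (norm_add_I_mul_cpow_neg_le (by linarith) (abs_pos.1 ?_) y).trans (by rw [hv])
  rw [hv]
  positivity

theorem lipschitz_summation_formula (hμ : 1 < μ.re) (hy : 0 < y) :
    ∑' k : ℕ, ((k : ℂ) + 1) ^ (μ - 1) * cexp (-(2 * π * y * (k + 1))) =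
      Gamma μ * (2 * π) ^ (-μ) *
        ((y : ℂ) ^ (-μ) + ∑' m : ℕ, conjCpowSum μ y (m + 1)) := by
  have hsum {v : ℕ → ℝ} (hv : ∀ m, |v m| = m + 1) :
      Summable fun m ↦ 𝓕 (lipschitzKernel μ y) (v m) := by
    simpa only [fourier_lipschitzKernel hμ hy] using
      (summable_add_I_mul_cpow_neg hμ y hv).mul_left (Gamma μ * (2 * π : ℂ) ^ (-μ))
  have hpoisson := tsum_add_one_eq_tsum_fourier (continuous_lipschitzKernel hμ y)
    (fun t ↦ lipschitzKernel_of_nonpos hμ y) one_lt_two (lipschitzKernel_isBigO μ hy)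
    (hsum fun m ↦ abs_of_pos (by positivity))
    (hsum fun m ↦ by rw [abs_neg, abs_of_pos (by positivity)])
  simp only [fourier_lipschitzKernel hμ hy, ← sub_I_mul_eq, ← mul_add] at hpoisson
  rw [tsum_mul_left, ← mul_add, ofReal_zero, mul_zero, add_zero] at hpoisson
  refine (tsum_congr fun k ↦ ?_).trans hpoisson
  rw [lipschitzKernel_of_nonneg μ y (by positivity)]
  push_cast
  rfl

end LipschitzFormula

section ContinuationDomain

/-- A connected open set joining the half-plane `0 < Re ν` to the strip `-1 < Re ν ≤ 0` while
avoiding the real poles `0` and `-1/2` of the functions to be continued. -/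
def continuationDomain : Set ℂ := {ν | 0 < ν.re} ∪ ({ν | -1 < ν.re} ∩ {ν | 0 < ν.im})

lemma isOpen_continuationDomain : IsOpen continuationDomain :=
  (isOpen_lt continuous_const continuous_re).union
    ((isOpen_lt continuous_const continuous_re).inter (isOpen_lt continuous_const continuous_im))

lemma isPreconnected_continuationDomain : IsPreconnected continuationDomain :=
  (convex_halfSpace_re_gt 0).isPreconnected.union (1 + I) (by simp) (by simp)
    ((convex_halfSpace_re_gt (-1)).inter (convex_halfSpace_im_gt 0)).isPreconnected

lemma eqOn_continuationDomain {f g : ℂ → ℂ} (hf : DifferentiableOn ℂ f continuationDomain)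
    (hg : DifferentiableOn ℂ g continuationDomain) {z : ℂ} (hz : z ∈ continuationDomain)
    (hfg : f =ᶠ[𝓝 z] g) : Set.EqOn f g continuationDomain :=
  (hf.analyticOnNhd isOpen_continuationDomain).eqOn_of_preconnected_of_eventuallyEq
    (hg.analyticOnNhd isOpen_continuationDomain) isPreconnected_continuationDomain hz hfg

variable {ν : ℂ}

lemma neg_one_lt_re_of_mem_continuationDomain (hν : ν ∈ continuationDomain) : -1 < ν.re :=
  hν.elim (fun h ↦ neg_one_lt_zero.trans h) fun h ↦ h.1

lemma ne_ofReal_of_mem_continuationDomain (hν : ν ∈ continuationDomain) {r : ℝ} (hr : r ≤ 0) :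
    ν ≠ r := by
  rintro rfl
  rcases hν with h | ⟨-, h⟩
  · exact hr.not_gt h
  · simp at h

lemma ne_zero_of_mem_continuationDomain (hν : ν ∈ continuationDomain) : ν ≠ 0 := by
  simpa using ne_ofReal_of_mem_continuationDomain hν le_rfl

lemma two_pi_ne_zero : (2 * π : ℂ) ≠ 0 :=
  mul_ne_zero two_ne_zero (ofReal_ne_zero.2 Real.pi_ne_zero)

lemma differentiableAt_Gamma_mul_cpow_neg {c : ℂ} (hc : c ≠ 0) (hν : ν ∈ continuationDomain) :
    DifferentiableAt ℂ (fun ν ↦ Gamma ν * c ^ (-ν)) ν := by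
  refine (differentiableAt_Gamma ν fun m hm ↦ ?_).fun_mul
    (differentiableAt_id.neg.const_cpow (.inl hc))
  exact ne_ofReal_of_mem_continuationDomain hν (r := -m) (by simp) (by simpa using hm)

lemma differentiableAt_riemannZeta_neg (hν : ν ∈ continuationDomain) :
    DifferentiableAt ℂ (fun ν ↦ riemannZeta (-ν)) ν := by
  refine (differentiableAt_riemannZeta fun h ↦ ?_).comp ν differentiableAt_id.neg
  have := neg_one_lt_re_of_mem_continuationDomain hν
  rw [neg_eq_iff_eq_neg.1 h] at this
  simp at this

end ContinuationDomain

section LocallyUniformSums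

lemma exists_re_norm_bounds {K : Set ℂ} (hK : IsCompact K) {a : ℝ}
    (ha : ∀ z ∈ K, a < z.re) : ∃ b > a, ∃ N > 0, ∀ z ∈ K, b ≤ z.re ∧ ‖z‖ ≤ N := by
  obtain ⟨b, hab, hb⟩ := hK.exists_forall_le' continuous_re.continuousOn ha
  obtain ⟨N, hN, hKN⟩ := hK.isBounded.exists_pos_norm_le
  exact ⟨b, hab, N, hN, fun z hz ↦ ⟨hb z hz, hKN z hz⟩⟩

lemma differentiable_tsum_cpow_mul {g : ℕ → ℂ}
    (hg : ∀ r : ℝ, Summable fun k : ℕ ↦ ((k : ℝ) + 1) ^ r * ‖g k‖) :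
    Differentiable ℂ fun ν : ℂ ↦ ∑' k : ℕ, ((k : ℂ) + 1) ^ (ν - 1) * g k := by
  rw [← differentiableOn_univ]
  refine SummableLocallyUniformlyOn.differentiableOn isOpen_univ
    (SummableLocallyUniformlyOn_of_locally_bounded isOpen_univ fun K _ hK ↦ ?_)
    fun k ν _ ↦ .mul_const (.const_cpow (by fun_prop) (.inl k.cast_add_one_ne_zero)) _
  obtain ⟨N, hN⟩ := hK.isBounded.exists_norm_le
  refine ⟨_, hg (N - 1), fun k ν hν ↦ ?_⟩
  rw [norm_mul, norm_natCast_add_one_cpow]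
  have hre := (re_le_norm ν).trans (hN ν hν)
  simp only [sub_re, one_re]
  gcongr
  simp

lemma differentiable_tsum_cpow_mul_cexp {y : ℝ} (hy : 0 < y) : Differentiable ℂ
    fun ν : ℂ ↦ ∑' k : ℕ, ((k : ℂ) + 1) ^ (ν - 1) * cexp (-(2 * π * y * (k + 1))) := by
  refine differentiable_tsum_cpow_mul fun r ↦
    (summable_rpow_mul_exp_neg_mul r (c := 2 * π * y) (by positivity)).congr fun k ↦ ?_
  simp [Complex.norm_exp]

lemma summable_mul_conjCpowSumRemainder {ι : Type*} {w : ι → ℂ} {y v : ι → ℝ}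
    (hy : ∀ i, 0 ≤ y i) (hv : ∀ i, 1 ≤ v i)
    (hsum : ∀ ρ : ℝ, 0 < ρ → Summable fun i ↦ ‖w i‖ * v i ^ (-(1 + ρ)) * y i ^ 2)
    {ν : ℂ} (hν : -1 < ν.re) :
    Summable fun i ↦ w i * conjCpowSumRemainder ν (y i) (v i) := by
  refine .of_norm_bounded ((hsum (ν.re + 1) (by linarith)).mul_left
    (2 * ‖ν‖ * ‖ν + 1‖ * Real.exp (π * |ν.im|))) fun i ↦ ?_
  have hbound := norm_conjCpowSumRemainder_le (ν := ν) (by linarith) (hy i)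
    (zero_lt_one.trans_le (hv i))
  rw [norm_mul, show 1 + (ν.re + 1) = ν.re + 2 by ring]
  calc _ ≤ ‖w i‖ * _ := mul_le_mul_of_nonneg_left hbound (norm_nonneg _)
    _ = _ := by ring

lemma differentiableOn_tsum_conjCpowSumRemainder {ι : Type*} {w : ι → ℂ} {y v : ι → ℝ}
    (hy : ∀ i, 0 ≤ y i) (hv : ∀ i, 1 ≤ v i)
    (hsum : ∀ ρ : ℝ, 0 < ρ → Summable fun i ↦ ‖w i‖ * v i ^ (-(1 + ρ)) * y i ^ 2) :
    DifferentiableOn ℂ (fun ν ↦ ∑' i, w i * conjCpowSumRemainder ν (y i) (v i))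
      {ν | -1 < ν.re} := by
  have hopen : IsOpen {ν : ℂ | -1 < ν.re} := isOpen_lt continuous_const continuous_re
  refine (SummableLocallyUniformlyOn_of_locally_bounded hopen fun K hKU hK ↦ ?_).differentiableOn
    hopen fun i ν _ ↦ .const_mul (differentiable_conjCpowSumRemainder _
      (zero_lt_one.trans_le (hv i)).ne' ν) _
  obtain ⟨b, hb, N, hN, hbN⟩ := exists_re_norm_bounds hK hKU
  refine ⟨_, (hsum (b + 1) (by linarith)).mul_left (2 * N * (N + 1) * Real.exp (π * N)),
    fun i ν hν ↦ ?_⟩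
  obtain ⟨hbν, hνN⟩ := hbN ν hν
  have hv' : 0 < v i := zero_lt_one.trans_le (hv i)
  have hν1 : ‖ν + 1‖ ≤ N + 1 := (norm_add_le _ _).trans (by simpa using hνN)
  have hexp : v i ^ (-(ν.re + 2)) ≤ v i ^ (-(1 + (b + 1))) :=
    Real.rpow_le_rpow_of_exponent_le (hv i) (by linarith)
  calc ‖w i * conjCpowSumRemainder ν (y i) (v i)‖
      ≤ ‖w i‖ * (2 * ‖ν‖ * ‖ν + 1‖ * Real.exp (π * |ν.im|) * v i ^ (-(ν.re + 2)) * y i ^ 2) := by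
        rw [norm_mul]
        gcongr
        exact norm_conjCpowSumRemainder_le (by linarith) (hy i) hv'
    _ ≤ ‖w i‖ * (2 * N * (N + 1) * Real.exp (π * N) * v i ^ (-(1 + (b + 1))) * y i ^ 2) := by
        gcongr
        exact (abs_im_le_norm ν).trans hνN
    _ = _ := by ring

end LocallyUniformSums

section PolylogRemainder

variable {ν : ℂ} {y : ℝ}

lemma Gamma_mul_cpow_mul_tsum_conjCpowSum_zero (hν : 1 < ν.re) :
    Gamma ν * (2 * π) ^ (-ν) * ∑' m : ℕ, conjCpowSum ν 0 (m + 1) = riemannZeta (1 - ν) := by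
  have hterm (m : ℕ) : conjCpowSum ν 0 (m + 1) =
      2 * Complex.cos (π * ν / 2) * (1 / ((m : ℂ) + 1) ^ ν) := by
    rw [conjCpowSum_zero_left ν (by positivity), cpow_neg, one_div]
    push_cast
    rfl
  have hpole (n : ℕ) : ν ≠ -n := fun h ↦ by
    rw [h] at hν
    simp only [neg_re, natCast_re] at hν
    linarith [n.cast_nonneg (α := ℝ)]
  rw [tsum_congr hterm, tsum_mul_left, ← zeta_eq_tsum_one_div_nat_add_one_cpow hν,
    riemannZeta_one_sub hpole fun h ↦ by simp [h] at hν]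
  ring

lemma Gamma_mul_cpow_neg_mul_self (hν : ν ≠ 0) :
    Gamma ν * (2 * π) ^ (-ν) * ν = 2 * π * (Gamma (ν + 1) * (2 * π) ^ (-(ν + 1))) := by
  have h2π := two_pi_ne_zero
  rw [Gamma_add_one ν hν, neg_add, cpow_add _ _ h2π, cpow_neg_one]
  field_simp

/-- `∑ k, k ^ (ν - 1) e^{-2πky}` minus the terms `Γ(ν) (2πy)^{-ν} + ζ(1 - ν)` of its expansion at
`y = 0`. -/
noncomputable def polylogRemainder (ν : ℂ) (y : ℝ) : ℂ :=
  ∑' k : ℕ, ((k : ℂ) + 1) ^ (ν - 1) * cexp (-(2 * π * y * (k + 1))) -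
    Gamma ν * (2 * π) ^ (-ν) * (y : ℂ) ^ (-ν) - riemannZeta (1 - ν)

lemma summable_conjCpowSum_sub (hν : 0 < ν.re) (hy : 0 ≤ y) :
    Summable fun m : ℕ ↦ conjCpowSum ν y (m + 1) - conjCpowSum ν 0 (m + 1) :=
  .of_norm_bounded (((summable_add_one_rpow (by linarith)).mul_left _).mul_right _)
    fun m ↦ norm_conjCpowSum_sub_le (by linarith) hy (by positivity)

lemma Gamma_mul_cpow_mul_tsum_conjCpowSumRemainder (hν : 0 < ν.re) (hy : 0 ≤ y) :
    Gamma ν * (2 * π) ^ (-ν) * ∑' m : ℕ, conjCpowSumRemainder ν y (m + 1) =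
      Gamma ν * (2 * π) ^ (-ν) * (∑' m : ℕ, (conjCpowSum ν y (m + 1) - conjCpowSum ν 0 (m + 1))) +
        2 * π * y * riemannZeta (-ν) := by
  have hν1 : 1 < (ν + 1).re := by simpa
  have hzeta := Gamma_mul_cpow_mul_tsum_conjCpowSum_zero hν1
  rw [sub_add_cancel_right] at hzeta
  simp only [conjCpowSumRemainder]
  rw [(summable_conjCpowSum_sub hν hy).tsum_add ((summable_conjCpowSum hν1 0).mul_left _),
    tsum_mul_left, mul_add, ← hzeta, ← mul_assoc, ← mul_assoc,
    Gamma_mul_cpow_neg_mul_self (by rintro rfl; simp at hν)]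
  ring

lemma polylogRemainder_eq_of_one_lt_re (hν : 1 < ν.re) (hy : 0 < y) :
    polylogRemainder ν y = Gamma ν * (2 * π) ^ (-ν) *
      ∑' m : ℕ, (conjCpowSum ν y (m + 1) - conjCpowSum ν 0 (m + 1)) := by
  rw [polylogRemainder, lipschitz_summation_formula hν hy,
    (summable_conjCpowSum hν y).tsum_sub (summable_conjCpowSum hν 0),
    ← Gamma_mul_cpow_mul_tsum_conjCpowSum_zero hν]
  ring

lemma differentiableOn_polylogRemainder (hy : 0 < y) :
    DifferentiableOn ℂ (fun ν ↦ polylogRemainder ν y) continuationDomain := by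
  intro ν hν
  have hpow := differentiableAt_Gamma_mul_cpow_neg two_pi_ne_zero hν
  refine (((differentiable_tsum_cpow_mul_cexp hy ν).sub (hpow.mul
    (differentiableAt_id.neg.const_cpow (.inl (ofReal_ne_zero.2 hy.ne'))))).sub
    ((differentiableAt_riemannZeta ?_).comp ν
      (differentiableAt_id.const_sub 1))).differentiableWithinAt
  simpa using ne_zero_of_mem_continuationDomain hν

lemma polylogRemainder_eq (hν : ν ∈ continuationDomain) (hy : 0 < y) :
    polylogRemainder ν y = -(2 * π * y * riemannZeta (-ν)) +
      Gamma ν * (2 * π) ^ (-ν) * ∑' m : ℕ, conjCpowSumRemainder ν y (m + 1) := by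
  have hdiff : DifferentiableOn ℂ (fun ν ↦ -(2 * π * y * riemannZeta (-ν)) +
      Gamma ν * (2 * π) ^ (-ν) * ∑' m : ℕ, conjCpowSumRemainder ν y (m + 1))
      continuationDomain := fun ν hν ↦ by
    have hpow := differentiableAt_Gamma_mul_cpow_neg two_pi_ne_zero hν
    have htsum := differentiableOn_tsum_conjCpowSumRemainder (w := fun _ : ℕ ↦ 1)
      (y := fun _ ↦ y) (v := fun m ↦ (m : ℝ) + 1) (fun _ ↦ hy.le) (by simp) fun ρ hρ ↦ by
        simpa using (summable_add_one_rpow (a := -(1 + ρ)) (by linarith)).mul_right (y ^ 2)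
    simp only [one_mul] at htsum
    exact (((differentiableAt_riemannZeta_neg hν).const_mul _).neg.add
      (hpow.mul (htsum.differentiableAt ((isOpen_lt continuous_const continuous_re).mem_nhds
        (neg_one_lt_re_of_mem_continuationDomain hν))))).differentiableWithinAt
  refine eqOn_continuationDomain (differentiableOn_polylogRemainder hy) hdiff
    (z := 2) (.inl (by simp)) ?_ hν
  have htwo : (1 : ℝ) < (2 : ℂ).re := by simp
  filter_upwards [(isOpen_lt continuous_const continuous_re).mem_nhds htwo] with ν (hν : 1 < ν.re)
  rw [polylogRemainder_eq_of_one_lt_re hν hy,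
    Gamma_mul_cpow_mul_tsum_conjCpowSumRemainder (by linarith) hy.le]
  ring

lemma polylogRemainder_eq_of_re_pos (hν : 0 < ν.re) (hy : 0 < y) :
    polylogRemainder ν y = Gamma ν * (2 * π) ^ (-ν) *
      ∑' m : ℕ, (conjCpowSum ν y (m + 1) - conjCpowSum ν 0 (m + 1)) := by
  rw [polylogRemainder_eq (.inl hν) hy, Gamma_mul_cpow_mul_tsum_conjCpowSumRemainder hν hy.le]
  ring

end PolylogRemainder

section CauchySchlomilch

variable {p q : ℝ}

lemma injOn_mul_sub_div (hp : 0 < p) (hq : 0 < q) :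
    Set.InjOn (fun u : ℝ ↦ p * u - q / u) (Set.Ioi 0) :=
  StrictMonoOn.injOn fun u (hu : 0 < u) v (_ : 0 < v) huv ↦
    sub_lt_sub (mul_lt_mul_of_pos_left huv hp) (div_lt_div_of_pos_left hq hu huv)

lemma image_mul_sub_div_Ioi (hp : 0 < p) (hq : 0 < q) :
    (fun u : ℝ ↦ p * u - q / u) '' Set.Ioi 0 = Set.univ := by
  refine Set.eq_univ_of_forall fun v ↦ ?_
  obtain ⟨D, hsq, habs⟩ : ∃ D : ℝ, D ^ 2 = v ^ 2 + 4 * p * q ∧ |v| < D :=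
    ⟨√(v ^ 2 + 4 * p * q), Real.sq_sqrt (by positivity),
      Real.lt_sqrt_of_sq_lt (by rw [sq_abs]; linarith [mul_pos (mul_pos four_pos hp) hq])⟩
  have hpos : 0 < v + D := by linarith [neg_abs_le v]
  refine ⟨(v + D) / (2 * p), Set.mem_Ioi.2 (by positivity), ?_⟩
  have hne := hpos.ne'
  field_simp
  linear_combination hsq

lemma integral_inv_sq_mul_comp_mul_sub_div_Ioi {F : ℝ → ℝ} (hF : F.Even) (hp : 0 < p)
    (hq : 0 < q) : ∫ u in Set.Ioi (0 : ℝ), q / u ^ 2 * F (p * u - q / u) =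
      p * ∫ u in Set.Ioi (0 : ℝ), F (p * u - q / u) := by
  have hinv := integral_comp_rpow_Ioi (fun u ↦ F (q * u - p / u)) (neg_ne_zero.2 one_ne_zero)
  have hscale := integral_comp_mul_left_Ioi (fun u ↦ F (p * u - q / u)) 0 (div_pos hq hp)
  have hswap (u : ℝ) : p * (q / p * u) - q / (q / p * u) = q * u - p / u := by
    field_simp
  simp only [hswap, mul_zero, smul_eq_mul] at hscale
  rw [hscale] at hinv
  calc ∫ u in Set.Ioi (0 : ℝ), q / u ^ 2 * F (p * u - q / u)
      = ∫ u in Set.Ioi (0 : ℝ), q * ((|(-1 : ℝ)| * u ^ ((-1 : ℝ) - 1)) •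
          F (q * u ^ (-1 : ℝ) - p / u ^ (-1 : ℝ))) := by
        refine setIntegral_congr_fun measurableSet_Ioi fun u (hu : 0 < u) ↦ ?_
        have hrpow : u ^ ((-1 : ℝ) - 1) = (u ^ 2)⁻¹ := by
          rw [← Real.rpow_natCast, ← Real.rpow_neg hu.le]
          norm_num
        have harg : q * u ^ (-1 : ℝ) - p / u ^ (-1 : ℝ) = -(p * u - q / u) := by
          rw [Real.rpow_neg_one]
          field_simp
          ring
        rw [hrpow, harg, hF, abs_neg, abs_one, smul_eq_mul]
        ring
    _ = _ := by
        rw [integral_const_mul, hinv]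
        field_simp

theorem integral_comp_mul_sub_div_Ioi {F : ℝ → ℝ} (hF : F.Even) (hint : Integrable F)
    (hp : 0 < p) (hq : 0 < q) :
    ∫ u in Set.Ioi (0 : ℝ), F (p * u - q / u) = (∫ v, F v) / (2 * p) := by
  have hderiv (u : ℝ) (hu : u ∈ Set.Ioi 0) :
      HasDerivWithinAt (fun u ↦ p * u - q / u) (p + q / u ^ 2) (Set.Ioi 0) u := by
    convert! (((hasDerivAt_id u).const_mul p).sub
      ((hasDerivAt_inv (ne_of_gt hu)).const_mul q)).hasDerivWithinAt using 1
    ring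
  have habs : Set.EqOn (fun u ↦ |p + q / u ^ 2| • F (p * u - q / u))
      (fun u ↦ p * F (p * u - q / u) + q / u ^ 2 * F (p * u - q / u)) (Set.Ioi 0) := fun u _ ↦ by
    simp only [smul_eq_mul]
    rw [abs_of_pos (by positivity), add_mul]
  have hchange := integral_image_eq_integral_abs_deriv_smul measurableSet_Ioi hderiv
    (injOn_mul_sub_div hp hq) F
  have hsum : IntegrableOn (fun u ↦ |p + q / u ^ 2| • F (p * u - q / u)) (Set.Ioi 0) := by
    rw [← integrableOn_image_iff_integrableOn_abs_deriv_smul measurableSet_Ioi hderiv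
      (injOn_mul_sub_div hp hq), image_mul_sub_div_Ioi hp hq]
    exact hint.integrableOn
  have hmain : IntegrableOn (fun u ↦ p * F (p * u - q / u)) (Set.Ioi 0) := by
    refine (hsum.bdd_mul (c := 1) (f := fun u ↦ p / (p + q / u ^ 2))
      (by fun_prop : Measurable fun u : ℝ ↦ p / (p + q / u ^ 2)).aestronglyMeasurable
      (.of_forall fun u ↦ ?_)).congr (.of_forall fun u ↦ ?_)
    · rw [Real.norm_of_nonneg (by positivity)]
      exact div_le_one_of_le₀ (le_add_of_nonneg_right (by positivity)) (by positivity)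
    · have hpos : 0 < p + q / u ^ 2 := by positivity
      simp only [smul_eq_mul]
      rw [abs_of_pos hpos, ← mul_assoc, div_mul_cancel₀ _ hpos.ne']
  have hrest : IntegrableOn (fun u ↦ q / u ^ 2 * F (p * u - q / u)) (Set.Ioi 0) :=
    ((hsum.congr_fun habs measurableSet_Ioi).sub hmain).congr (.of_forall fun u ↦ by simp)
  rw [image_mul_sub_div_Ioi hp hq, setIntegral_univ, setIntegral_congr_fun measurableSet_Ioi habs,
    integral_add hmain hrest, integral_const_mul,
    integral_inv_sq_mul_comp_mul_sub_div_Ioi hF hp hq] at hchange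
  rw [hchange]
  field_simp
  ring

end CauchySchlomilch

section LevyKernel

variable {b : ℝ}

/-- The density `t^{-3/2} e^{-b/t}` on `t > 0` of a Lévy distribution, up to normalization. For
`t ≤ 0` the value is `0`, since `√t = 0` there. -/
noncomputable def levyKernel (b t : ℝ) : ℝ := (t * √t)⁻¹ * Real.exp (-(b / t))

lemma levyKernel_of_nonpos (b : ℝ) {t : ℝ} (ht : t ≤ 0) : levyKernel b t = 0 := by
  simp [levyKernel, Real.sqrt_eq_zero'.2 ht]

lemma levyKernel_nonneg (b t : ℝ) : 0 ≤ levyKernel b t := by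
  rcases le_or_gt t 0 with ht | ht
  · rw [levyKernel_of_nonpos b ht]
  · unfold levyKernel
    positivity

lemma inv_mul_sqrt_eq_rpow {t : ℝ} (ht : 0 < t) : (t * √t)⁻¹ = t ^ (-(3 / 2) : ℝ) := by
  rw [Real.rpow_neg ht.le, Real.sqrt_eq_rpow, ← Real.rpow_one_add' ht.le (by norm_num)]
  norm_num

lemma levyKernel_le_rpow (hb : 0 < b) {t : ℝ} (ht : 0 < t) :
    levyKernel b t ≤ t ^ (-(3 / 2) : ℝ) := by
  rw [levyKernel, inv_mul_sqrt_eq_rpow ht]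
  exact mul_le_of_le_one_right (by positivity)
    (Real.exp_le_one_iff.2 (neg_nonpos.2 (by positivity)))

lemma levyKernel_le_sqrt (hb : 0 < b) (t : ℝ) : levyKernel b t ≤ 2 / b ^ 2 * √t := by
  rcases le_or_gt t 0 with ht | ht
  · rw [levyKernel_of_nonpos b ht]
    positivity
  · have hexp : (b / t) ^ 2 / 2 ≤ Real.exp (b / t) := by
      simpa using Real.pow_div_factorial_le_exp (b / t) (by positivity) 2
    calc levyKernel b t ≤ (t * √t)⁻¹ * ((b / t) ^ 2 / 2)⁻¹ := by
          rw [levyKernel, Real.exp_neg]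
          gcongr
      _ = 2 / b ^ 2 * (t / √t) := by field_simp
      _ = 2 / b ^ 2 * √t := by rw [Real.div_sqrt]

lemma continuous_levyKernel (hb : 0 < b) : Continuous (levyKernel b) := by
  refine continuous_iff_continuousAt.2 fun t ↦ ?_
  rcases lt_trichotomy t 0 with ht | rfl | ht
  · refine continuousAt_const.congr (f := fun _ ↦ 0) ?_
    filter_upwards [eventually_lt_nhds ht] with u hu
    rw [levyKernel_of_nonpos b hu.le]
  · rw [ContinuousAt, levyKernel_of_nonpos b le_rfl]
    refine squeeze_zero (levyKernel_nonneg b) (levyKernel_le_sqrt hb) ?_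
    have hsqrt : Continuous fun t ↦ 2 / b ^ 2 * √t := by fun_prop
    exact hsqrt.tendsto' 0 0 (by simp)
  · have hne : t * √t ≠ 0 := by positivity
    exact ((by fun_prop : ContinuousAt (fun t ↦ t * √t) t).inv₀ hne).mul
      (continuousAt_const.div continuousAt_id ht.ne').neg.rexp

lemma integrableOn_levyKernel (hb : 0 < b) : IntegrableOn (levyKernel b) (Set.Ioi 0) := by
  rw [← Set.Ioc_union_Ioi_eq_Ioi (zero_le_one' ℝ)]
  refine (continuous_levyKernel hb).integrableOn_Ioc.union
    ((integrableOn_Ioi_rpow_of_lt (a := -(3 / 2)) (by norm_num) one_pos).mono'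
      (continuous_levyKernel hb).aestronglyMeasurable ?_)
  filter_upwards [ae_restrict_mem measurableSet_Ioi] with t ht
  rw [Real.norm_of_nonneg (levyKernel_nonneg b t)]
  exact levyKernel_le_rpow hb (zero_lt_one.trans ht)

lemma integral_levyKernel_mul_exp_neg_mul (hb : 0 < b) {r : ℝ} (hr : 0 < r) :
    ∫ t in Set.Ioi (0 : ℝ), levyKernel b t * Real.exp (-(r * t)) =
      √(π / b) * Real.exp (-(2 * √b * √r)) := by
  have hgauss := integral_comp_mul_sub_div_Ioi (F := fun u ↦ Real.exp (-1 * u ^ 2))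
    (fun u ↦ by simp) (integrable_exp_neg_mul_sq one_pos) (Real.sqrt_pos.2 hb) (Real.sqrt_pos.2 hr)
  rw [integral_gaussian, div_one] at hgauss
  rw [← integral_comp_rpow_Ioi _ (by norm_num : (-2 : ℝ) ≠ 0)]
  calc ∫ u in Set.Ioi (0 : ℝ), (|(-2 : ℝ)| * u ^ ((-2 : ℝ) - 1)) •
        (levyKernel b (u ^ (-2 : ℝ)) * Real.exp (-(r * u ^ (-2 : ℝ))))
      = ∫ u in Set.Ioi (0 : ℝ), 2 * Real.exp (-(2 * √b * √r)) *
          Real.exp (-1 * (√b * u - √r / u) ^ 2) := by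
        refine setIntegral_congr_fun measurableSet_Ioi fun u (hu : 0 < u) ↦ ?_
        have hsq : u ^ (-2 : ℝ) = (u ^ 2)⁻¹ := by
          rw [Real.rpow_neg hu.le]
          norm_num
        have hcube : u ^ ((-2 : ℝ) - 1) * (u ^ (-2 : ℝ)) ^ (-(3 / 2) : ℝ) = 1 := by
          rw [← Real.rpow_mul hu.le, ← Real.rpow_add hu]
          norm_num
        have hexp : -(b / (u ^ 2)⁻¹) + -(r * (u ^ 2)⁻¹) =
            -(2 * √b * √r) + -1 * (√b * u - √r / u) ^ 2 := by
          field_simp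
          linear_combination u ^ 4 * Real.sq_sqrt hb.le + Real.sq_sqrt hr.le
        rw [levyKernel, inv_mul_sqrt_eq_rpow (by positivity), smul_eq_mul, mul_assoc 2,
          ← Real.exp_add, ← hexp, Real.exp_add, abs_neg, abs_two, ← hsq]
        linear_combination
          (2 * Real.exp (-(b / u ^ (-2 : ℝ))) * Real.exp (-(r * u ^ (-2 : ℝ)))) * hcube
    _ = √(π / b) * Real.exp (-(2 * √b * √r)) := by
        rw [integral_const_mul, hgauss, Real.sqrt_div Real.pi_pos.le]
        field_simp

end LevyKernel

section LevyPoisson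

variable {b : ℝ}

lemma integral_levyKernel_mul_cexp_neg_mul_of_re_pos (hb : 0 < b) {c : ℂ} (hc : 0 < c.re) :
    ∫ t in Set.Ioi (0 : ℝ), (levyKernel b t : ℂ) * cexp (-(c * t)) =
      √(π / b) * cexp (-(2 * √b * c ^ (2⁻¹ : ℂ))) := by
  refine eqOn_re_pos_of_forall_ofReal (F := fun c ↦ ∫ t in Set.Ioi (0 : ℝ), _)
    (G := fun c ↦ √(π / b) * cexp (-(2 * √b * c ^ (2⁻¹ : ℂ))))
    (differentiableOn_laplace fun ε hε ↦ ?_) (fun z hz ↦ ?_) (fun r hr ↦ ?_) hc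
  · have hcont := continuous_levyKernel hb
    refine (integrableOn_levyKernel hb).mono' (Continuous.aestronglyMeasurable (by fun_prop)) ?_
    filter_upwards [ae_restrict_mem measurableSet_Ioi] with t (ht : 0 < t)
    rw [← ofReal_mul, ← ofReal_neg, ← ofReal_exp, ← ofReal_mul, norm_real,
      Real.norm_of_nonneg (mul_nonneg (levyKernel_nonneg b t) (Real.exp_nonneg _))]
    exact mul_le_of_le_one_right (levyKernel_nonneg b t)
      (Real.exp_le_one_iff.2 (neg_nonpos.2 (by positivity)))
  · exact (((differentiableAt_id.cpow_const (.inl hz)).const_mul _).neg.cexp.const_mul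
      _).differentiableWithinAt
  · have hsqrt : (r : ℂ) ^ (2⁻¹ : ℂ) = √r := by
      rw [Real.sqrt_eq_rpow, ofReal_cpow hr.le]
      norm_num
    rw [hsqrt]
    exact_mod_cast congrArg ofReal (integral_levyKernel_mul_exp_neg_mul hb hr)

lemma integral_levyKernel_mul_cexp_neg_mul (hb : 0 < b) {c : ℂ} (hc : 0 ≤ c.re) :
    ∫ t in Set.Ioi (0 : ℝ), (levyKernel b t : ℂ) * cexp (-(c * t)) =
      √(π / b) * cexp (-(2 * √b * c ^ (2⁻¹ : ℂ))) := by
  have hcont := continuous_levyKernel hb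
  have hshift : Tendsto (fun ε : ℝ ↦ c + ε) (𝓝[>] 0) (𝓝 c) :=
    ((by fun_prop : Continuous fun ε : ℝ ↦ c + ε).tendsto' 0 c (by simp)).mono_left
      nhdsWithin_le_nhds
  have hleft : Tendsto (fun ε : ℝ ↦
      ∫ t in Set.Ioi (0 : ℝ), (levyKernel b t : ℂ) * cexp (-((c + ε) * t))) (𝓝[>] 0)
      (𝓝 (∫ t in Set.Ioi (0 : ℝ), (levyKernel b t : ℂ) * cexp (-(c * t)))) := by
    refine tendsto_integral_filter_of_dominated_convergence (levyKernel b)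
      (.of_forall fun ε ↦ Continuous.aestronglyMeasurable (by fun_prop)) ?_
      (integrableOn_levyKernel hb) (.of_forall fun t ↦ ?_)
    · filter_upwards [self_mem_nhdsWithin] with ε (hε : 0 < ε)
      filter_upwards [ae_restrict_mem measurableSet_Ioi] with t (ht : 0 < t)
      have hre : 0 ≤ (c.re + ε) * t := by positivity
      rw [norm_mul, norm_real, norm_exp, Real.norm_of_nonneg (levyKernel_nonneg b t)]
      refine mul_le_of_le_one_right (levyKernel_nonneg b t) (Real.exp_le_one_iff.2 ?_)
      simpa using hre
    · have hz : Continuous fun z : ℂ ↦ (levyKernel b t : ℂ) * cexp (-(z * t)) := by fun_prop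
      exact (hz.tendsto c).comp hshift
  have hright : Tendsto (fun ε : ℝ ↦ √(π / b) * cexp (-(2 * √b * (c + ε) ^ (2⁻¹ : ℂ)))) (𝓝[>] 0)
      (𝓝 (√(π / b) * cexp (-(2 * √b * c ^ (2⁻¹ : ℂ))))) := by
    have hpow : ContinuousAt (fun z : ℂ ↦ z ^ (2⁻¹ : ℂ)) c :=
      continuousAt_cpow_const_of_re_pos (.inl hc) (by norm_num)
    have hexp : Continuous fun w : ℂ ↦ √(π / b) * cexp (-(2 * √b * w)) := by fun_prop
    exact (hexp.tendsto _).comp (hpow.tendsto.comp hshift)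
  refine tendsto_nhds_unique hleft (hright.congr' ?_)
  filter_upwards [self_mem_nhdsWithin] with ε (hε : 0 < ε)
  exact (integral_levyKernel_mul_cexp_neg_mul_of_re_pos hb
    (by simpa using add_pos_of_nonneg_of_pos hc hε)).symm

lemma fourier_levyKernel (hb : 0 < b) {ξ : ℝ} {w : ℂ} (hw : 0 < w.re ∨ w = 0)
    (hξ : w ^ 2 = 2 * π * I * ξ) :
    𝓕 (fun t ↦ (levyKernel b t : ℂ)) ξ = √(π / b) * cexp (-(2 * √b * w)) := by
  have hsqrt : (w ^ 2) ^ (2⁻¹ : ℂ) = w := by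
    rcases hw with hw | rfl
    · exact sq_cpow_two_inv hw
    · norm_num
  rw [fourier_eq_integral_Ioi fun t ht ↦ by rw [levyKernel_of_nonpos b ht, ofReal_zero], ← hξ,
    integral_levyKernel_mul_cexp_neg_mul hb (by simp [hξ]), hsqrt]

end LevyPoisson

section LevyKernelSum

variable {a : ℝ}

lemma fourier_levyKernel_zero (ha : 0 < a) :
    𝓕 (fun t ↦ (levyKernel (a ^ 2 / (4 * π)) t : ℂ)) 0 = (2 * π / a : ℝ) := by
  have hconst : π / (a ^ 2 / (4 * π)) = (2 * π / a) ^ 2 := by field_simp; ring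
  rw [fourier_levyKernel (by positivity) (.inr rfl) (by simp), hconst,
    Real.sqrt_sq (by positivity)]
  simp

lemma fourier_levyKernel_of_sign (ha : 0 < a) {r : ℝ} (hr : 0 < r) {σ : ℝ} (hσ : σ ^ 2 = 1) :
    𝓕 (fun t ↦ (levyKernel (a ^ 2 / (4 * π)) t : ℂ)) (σ * r) =
      (2 * π / a : ℝ) * cexp (-(a * √r * (1 + σ * I))) := by
  have hconst : π / (a ^ 2 / (4 * π)) = (2 * π / a) ^ 2 := by field_simp; ring
  have hsqrt : 2 * √(a ^ 2 / (4 * π)) * √(π * r) = a * √r := by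
    rw [Real.sqrt_div (by positivity), Real.sqrt_sq ha.le, Real.sqrt_mul zero_le_four,
      Real.sqrt_mul Real.pi_pos.le, show √4 = 2 by rw [Real.sqrt_eq_iff_mul_self_eq] <;> norm_num]
    field_simp
  have hsq : ((√(π * r) : ℂ) * (1 + σ * I)) ^ 2 = 2 * π * I * (σ * r : ℝ) := by
    have hr' : ((√(π * r) : ℝ) : ℂ) ^ 2 = π * r := by
      exact_mod_cast congrArg ofReal (Real.sq_sqrt (by positivity : 0 ≤ π * r))
    have hσ' : (σ : ℂ) ^ 2 = 1 := mod_cast congrArg ofReal hσ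
    push_cast
    linear_combination (1 + σ * I) ^ 2 * hr' + π * r * σ ^ 2 * I_sq - π * r * hσ'
  have hre : 0 < ((√(π * r) : ℂ) * (1 + σ * I)).re := by
    rw [re_ofReal_mul]
    simpa using mul_pos Real.pi_pos hr
  rw [fourier_levyKernel (by positivity) (.inl hre) hsq, hconst, Real.sqrt_sq (by positivity)]
  congr 3
  rw [← mul_assoc]
  exact_mod_cast congrArg (fun u : ℝ ↦ (u : ℂ) * (1 + σ * I)) hsqrt

theorem tsum_levyKernel (ha : 0 < a) :
    ∑' d : ℕ, levyKernel (a ^ 2 / (4 * π)) ((d : ℝ) + 1) =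
      2 * π / a * (1 + 2 * ∑' k : ℕ, Real.exp (-(a * √((k : ℝ) + 1))) *
        Real.cos (a * √((k : ℝ) + 1))) := by
  have hcont := continuous_levyKernel (b := a ^ 2 / (4 * π)) (by positivity)
  have hsum (σ : ℝ) : Summable fun k : ℕ ↦ cexp (-(a * √((k : ℝ) + 1) * (1 + σ * I))) := by
    refine Summable.of_norm_bounded (summable_rpow_mul_exp_neg_mul_sqrt 0 ha) fun k ↦ ?_
    rw [norm_exp]
    simp
  set F : ℝ → ℂ := 𝓕 fun t ↦ (levyKernel (a ^ 2 / (4 * π)) t : ℂ)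
  have hpos (k : ℕ) : F ((k : ℝ) + 1) =
      (2 * π / a : ℝ) * cexp (-(a * √((k : ℝ) + 1) * (1 + (1 : ℝ) * I))) := by
    rw [← fourier_levyKernel_of_sign ha (by positivity) (one_pow 2), one_mul]
  have hneg (k : ℕ) : F (-((k : ℝ) + 1)) =
      (2 * π / a : ℝ) * cexp (-(a * √((k : ℝ) + 1) * (1 + (-1 : ℝ) * I))) := by
    rw [← fourier_levyKernel_of_sign ha (by positivity) neg_one_sq, neg_one_mul]
  have hpoisson := tsum_add_one_eq_tsum_fourier
    (f := fun t ↦ (levyKernel (a ^ 2 / (4 * π)) t : ℂ)) (by fun_prop)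
    (fun t ht ↦ by rw [levyKernel_of_nonpos _ ht, ofReal_zero]) (by norm_num : (1 : ℝ) < 3 / 2) ?_
    (((hsum 1).mul_left _).congr fun k ↦ (hpos k).symm)
    (((hsum (-1)).mul_left _).congr fun k ↦ (hneg k).symm)
  · have hpair (k : ℕ) : F ((k : ℝ) + 1) + F (-((k : ℝ) + 1)) =
        (2 * π / a * (2 * (Real.exp (-(a * √((k : ℝ) + 1))) *
          Real.cos (a * √((k : ℝ) + 1)))) : ℝ) := by
      rw [hpos, hneg, mul_add, mul_add, neg_add, neg_add, Complex.exp_add, Complex.exp_add]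
      push_cast
      rw [Complex.cos]
      ring_nf
    apply ofReal_injective
    rw [ofReal_tsum, hpoisson, fourier_levyKernel_zero ha, tsum_congr hpair, ← ofReal_tsum,
      ← ofReal_add, tsum_mul_left, tsum_mul_left, mul_add, mul_one]
  · refine .of_bound 1 ?_
    filter_upwards [eventually_gt_atTop 0] with t ht
    rw [norm_real, Real.norm_of_nonneg (levyKernel_nonneg _ t), abs_of_pos ht, one_mul,
      Real.norm_of_nonneg (by positivity)]
    exact levyKernel_le_rpow (by positivity) ht

end LevyKernelSum

section SumIntegralComparison

variable {E : Type*} [NormedAddCommGroup E]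

lemma norm_sub_sub_le_of_hasDerivAt [NormedSpace ℝ E] {H h h' : ℝ → E} {t C : ℝ}
    (hH : ∀ u ∈ Set.Icc t (t + 1), HasDerivAt H (h u) u)
    (hh : ∀ u ∈ Set.Icc t (t + 1), HasDerivAt h (h' u) u)
    (hC : ∀ u ∈ Set.Icc t (t + 1), ‖h' u‖ ≤ C) : ‖h t - (H (t + 1) - H t)‖ ≤ C := by
  have hend : t + 1 ∈ Set.Icc t (t + 1) := Set.right_mem_Icc.2 (by linarith)
  have hlip (u : ℝ) (hu : u ∈ Set.Icc t (t + 1)) : ‖h u - h t‖ ≤ C := by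
    refine (norm_image_sub_le_of_norm_deriv_le_segment' (fun v hv ↦ (hh v hv).hasDerivWithinAt)
      (fun v hv ↦ hC v (Set.Ico_subset_Icc_self hv)) u hu).trans ?_
    exact mul_le_of_le_one_right ((norm_nonneg _).trans (hC u hu)) (by linarith [hu.2])
  have hdiff := norm_image_sub_le_of_norm_deriv_le_segment' (f := fun u ↦ H u - u • h t)
    (fun u hu ↦ ((hH u hu).sub ((hasDerivAt_id u).smul_const (h t))).hasDerivWithinAt)
    (fun u hu ↦ by simpa using hlip u (Set.Ico_subset_Icc_self hu)) (t + 1) hend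
  rw [add_sub_cancel_left, mul_one, ← norm_neg] at hdiff
  convert! hdiff using 2
  rw [add_smul, one_smul]
  abel

lemma tsum_succ_sub_eq_neg {f : ℕ → E} (hf : Tendsto f atTop (𝓝 0))
    (hsum : Summable fun n ↦ f (n + 1) - f n) : ∑' n, (f (n + 1) - f n) = -f 0 := by
  refine tendsto_nhds_unique hsum.hasSum.tendsto_sum_nat ?_
  simpa only [sum_range_sub, zero_sub] using hf.sub_const (f 0)

end SumIntegralComparison

section ZetaSeries

/-- The `n`-th term of the series for `(s - 1) * ζ(s) - 1` that compares `∑ n ^ (-s)` with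
`∫ t ^ (-s)`; unlike the Dirichlet series it converges on all of `0 < Re s`. -/
noncomputable def zetaSeriesTerm (s : ℂ) (n : ℕ) : ℂ :=
  (s - 1) * ((n : ℂ) + 1) ^ (-s) + (((n : ℂ) + 2) ^ (1 - s) - ((n : ℂ) + 1) ^ (1 - s))

lemma hasDerivAt_ofReal_cpow (c : ℂ) {t : ℝ} (ht : 0 < t) :
    HasDerivAt (fun u : ℝ ↦ (u : ℂ) ^ c) (c * (t : ℂ) ^ (c - 1)) t := by
  simpa using ((hasDerivAt_id (t : ℂ)).cpow_const (c := c) (by simpa using ht)).comp_ofReal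

lemma norm_zetaSeriesTerm_le {s : ℂ} (hs : 0 < s.re) (n : ℕ) :
    ‖zetaSeriesTerm s n‖ ≤ ‖s - 1‖ * ‖s‖ * ((n : ℝ) + 1) ^ (-s.re - 1) := by
  have hn : 0 < (n : ℝ) + 1 := by positivity
  have hterm : zetaSeriesTerm s n = (s - 1) * (((n : ℝ) + 1 : ℝ) : ℂ) ^ (-s) -
      (-((((n : ℝ) + 1 + 1 : ℝ) : ℂ) ^ (1 - s)) - -((((n : ℝ) + 1 : ℝ) : ℂ) ^ (1 - s))) := by
    rw [zetaSeriesTerm, show (((n : ℝ) + 1 + 1 : ℝ) : ℂ) = n + 2 by push_cast; ring]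
    push_cast
    ring
  rw [hterm]
  refine norm_sub_sub_le_of_hasDerivAt (t := (n : ℝ) + 1)
    (H := fun u ↦ -((u : ℂ) ^ (1 - s))) (h := fun u ↦ (s - 1) * (u : ℂ) ^ (-s))
    (h' := fun u ↦ (s - 1) * (-s * (u : ℂ) ^ (-s - 1)))
    (fun u hu ↦ ?_) (fun u hu ↦ ?_) (fun u hu ↦ ?_) <;> have hu0 : 0 < u := hn.trans_le hu.1
  · convert! (hasDerivAt_ofReal_cpow (1 - s) hu0).neg using 1
    ring_nf
  · exact (hasDerivAt_ofReal_cpow (-s) hu0).const_mul _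
  · rw [norm_mul, norm_mul, norm_neg, norm_cpow_eq_rpow_re_of_pos hu0, mul_assoc]
    gcongr ?_ * (?_ * ?_)
    exact Real.rpow_le_rpow_of_nonpos hn hu.1 (by simp; linarith)

lemma differentiableOn_tsum_zetaSeriesTerm :
    DifferentiableOn ℂ (fun s ↦ ∑' n, zetaSeriesTerm s n) {s | 0 < s.re} := by
  have hopen : IsOpen {s : ℂ | 0 < s.re} := isOpen_lt continuous_const continuous_re
  refine (SummableLocallyUniformlyOn_of_locally_bounded hopen fun K hKU hK ↦ ?_).differentiableOn
    hopen fun n s _ ↦ ?_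
  · obtain ⟨b, hb, N, hN, hbN⟩ := exists_re_norm_bounds hK hKU
    refine ⟨_, (summable_add_one_rpow (by linarith : -b - 1 < -1)).mul_left ((N + 1) * N),
      fun n s hs ↦ ?_⟩
    obtain ⟨hbs, hsN⟩ := hbN s hs
    refine (norm_zetaSeriesTerm_le (hb.trans_le hbs) n).trans ?_
    gcongr
    · exact (norm_sub_le _ _).trans (by simpa using hsN)
    · linarith [n.cast_nonneg (α := ℝ)]
  · have hn1 : (n : ℂ) + 1 ≠ 0 := by exact_mod_cast n.succ_ne_zero
    have hn2 : (n : ℂ) + 2 ≠ 0 := by exact_mod_cast (n + 1).succ_ne_zero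
    unfold zetaSeriesTerm
    fun_prop (disch := simp [hn1, hn2])

lemma one_add_tsum_zetaSeriesTerm_of_one_lt_re {s : ℂ} (hs : 1 < s.re) :
    1 + ∑' n, zetaSeriesTerm s n = (s - 1) * riemannZeta s := by
  have hdir : Summable fun n : ℕ ↦ ((n : ℂ) + 1) ^ (-s) := by
    refine .of_norm_bounded (summable_add_one_rpow (by linarith : -s.re < -1)) fun n ↦ ?_
    rw [norm_natCast_add_one_cpow, neg_re]
  have hall : Summable (zetaSeriesTerm s) := .of_norm_bounded
    ((summable_add_one_rpow (by linarith : -s.re - 1 < -1)).mul_left _)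
    (norm_zetaSeriesTerm_le (by linarith))
  have htel : Summable fun n : ℕ ↦ (((n + 1 : ℕ) : ℂ) + 1) ^ (1 - s) - ((n : ℂ) + 1) ^ (1 - s) := by
    refine (hall.sub (hdir.mul_left (s - 1))).congr fun n ↦ ?_
    rw [zetaSeriesTerm, add_sub_cancel_left]
    push_cast
    ring_nf
  have hzero : Tendsto (fun n : ℕ ↦ ((n : ℂ) + 1) ^ (1 - s)) atTop (𝓝 0) := by
    rw [tendsto_zero_iff_norm_tendsto_zero]
    simp only [norm_natCast_add_one_cpow]
    simpa [Function.comp_def] using (tendsto_rpow_neg_atTop (by linarith : 0 < s.re - 1)).comp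
      (tendsto_atTop_add_const_right _ 1 tendsto_natCast_atTop_atTop)
  have hsplit (n : ℕ) : zetaSeriesTerm s n = (s - 1) * ((n : ℂ) + 1) ^ (-s) +
      ((((n + 1 : ℕ) : ℂ) + 1) ^ (1 - s) - ((n : ℂ) + 1) ^ (1 - s)) := by
    rw [zetaSeriesTerm]
    push_cast
    ring_nf
  rw [tsum_congr hsplit, (hdir.mul_left _).tsum_add htel, tsum_mul_left,
    tsum_succ_sub_eq_neg (f := fun n : ℕ ↦ ((n : ℂ) + 1) ^ (1 - s)) hzero htel,
    zeta_eq_tsum_one_div_nat_add_one_cpow hs]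
  simp [cpow_neg]

theorem one_add_tsum_zetaSeriesTerm {s : ℂ} (hs : 0 < s.re) (hs1 : s ≠ 1) :
    1 + ∑' n, zetaSeriesTerm s n = (s - 1) * riemannZeta s := by
  have hzeta {z : ℂ} (hz : z ≠ 1) : riemannZeta₁ z = (z - 1) * riemannZeta z := by
    rw [riemannZeta_eq_inv_sub_mul hz, mul_inv_cancel_left₀ (sub_ne_zero.2 hz)]
  have hopen : IsOpen {z : ℂ | 0 < z.re} := isOpen_lt continuous_const continuous_re
  rw [← hzeta hs1]
  refine AnalyticOnNhd.eqOn_of_preconnected_of_eventuallyEq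
    (f := fun z ↦ 1 + ∑' n, zetaSeriesTerm z n) (z₀ := 2)
    ((differentiableOn_tsum_zetaSeriesTerm.const_add 1).analyticOnNhd hopen)
    (differentiable_riemannZeta₁.differentiableOn.analyticOnNhd hopen)
    (convex_halfSpace_re_gt 0).isPreconnected (by simp) ?_ hs
  filter_upwards [(isOpen_lt continuous_const continuous_re).mem_nhds
    (by simp : 1 < (2 : ℂ).re)] with z hz
  rw [one_add_tsum_zetaSeriesTerm_of_one_lt_re hz, hzeta fun h ↦ by simp [h] at hz]

/-- The value `ζ(1/2)` as a real number, given by the limit of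
`∑ k ^ (-1/2) - ∫ t ^ (-1/2)`. -/
noncomputable def zetaHalf : ℝ :=
  ∑' n : ℕ, ((√((n : ℝ) + 1))⁻¹ - 2 * (√((n : ℝ) + 1 + 1) - √((n : ℝ) + 1))) - 2

lemma ofReal_cpow_half {r : ℝ} (hr : 0 ≤ r) : (r : ℂ) ^ (1 / 2 : ℂ) = √r := by
  rw [Real.sqrt_eq_rpow, ofReal_cpow hr]
  norm_num

theorem riemannZeta_half : riemannZeta (1 / 2) = zetaHalf := by
  have hterm (n : ℕ) : zetaSeriesTerm (1 / 2) n =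
      (-(1 / 2) * ((√((n : ℝ) + 1))⁻¹ - 2 * (√((n : ℝ) + 1 + 1) - √((n : ℝ) + 1))) : ℝ) := by
    have hsqrt1 := ofReal_cpow_half (by positivity : 0 ≤ (n : ℝ) + 1)
    have hsqrt2 := ofReal_cpow_half (by positivity : 0 ≤ (n : ℝ) + 1 + 1)
    push_cast [add_assoc, one_add_one_eq_two] at hsqrt1 hsqrt2 ⊢
    rw [zetaSeriesTerm, cpow_neg, (by norm_num : (1 - 1 / 2 : ℂ) = 1 / 2), hsqrt1, hsqrt2]
    ring
  have hseries := one_add_tsum_zetaSeriesTerm (s := 1 / 2) (by simp) (by norm_num)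
  rw [tsum_congr hterm, ← ofReal_tsum, tsum_mul_left] at hseries
  rw [zetaHalf]
  push_cast at hseries ⊢
  linear_combination 2 * hseries

end ZetaSeries

section DampedSine

/-- The damped sine `e ^ (-u) * sin (π / 4 - u)` of Ramanujan's series. -/
noncomputable def dampedSine (u : ℝ) : ℝ := Real.exp (-u) * Real.sin (π / 4 - u)

lemma abs_dampedSine_le (u : ℝ) : |dampedSine u| ≤ Real.exp (-u) := by
  rw [dampedSine, abs_mul, Real.abs_exp]
  exact mul_le_of_le_one_right (Real.exp_nonneg _) (Real.abs_sin_le_one _)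

lemma sqrt_two_mul_dampedSine (u : ℝ) :
    √2 * dampedSine u = Real.exp (-u) * (Real.cos u - Real.sin u) := by
  rw [dampedSine, Real.sin_sub, Real.sin_pi_div_four, Real.cos_pi_div_four]
  linear_combination (Real.exp (-u) * (Real.cos u - Real.sin u) / 2) * Real.sq_sqrt zero_le_two

lemma hasDerivAt_exp_neg_mul_sin (u : ℝ) :
    HasDerivAt (fun u ↦ Real.exp (-u) * Real.sin u) (√2 * dampedSine u) u := by
  rw [sqrt_two_mul_dampedSine]
  convert! (hasDerivAt_neg u).exp.mul (Real.hasDerivAt_sin u) using 1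
  ring

lemma hasDerivAt_sqrt_two_mul_dampedSine (u : ℝ) :
    HasDerivAt (fun u ↦ √2 * dampedSine u) (-(2 * (Real.exp (-u) * Real.cos u))) u := by
  simp only [sqrt_two_mul_dampedSine]
  convert! (hasDerivAt_neg u).exp.mul ((Real.hasDerivAt_cos u).sub (Real.hasDerivAt_sin u)) using 1
  simp only [Pi.sub_apply]
  ring

lemma hasDerivAt_const_mul_sqrt (a : ℝ) {t : ℝ} (ht : 0 < t) :
    HasDerivAt (fun t ↦ a * √t) (a / (2 * √t)) t := by
  simpa [div_eq_mul_inv] using (Real.hasDerivAt_sqrt ht.ne').const_mul a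

/-- The series `∑ k ^ (-1/2) * dampedSine (a * √k)` over `k ≥ 1`. -/
noncomputable def dampedSineSum (a : ℝ) : ℝ :=
  ∑' j : ℕ, (√((j : ℝ) + 1))⁻¹ * dampedSine (a * √((j : ℝ) + 1))

variable {a : ℝ}

lemma norm_inv_sqrt_mul_dampedSine_le (a : ℝ) (j : ℕ) :
    ‖(√((j : ℝ) + 1))⁻¹ * dampedSine (a * √((j : ℝ) + 1))‖ ≤
      Real.exp (-(a * √((j : ℝ) + 1))) := by
  have hsqrt : 1 ≤ √((j : ℝ) + 1) := Real.one_le_sqrt.2 (by simp)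
  rw [norm_mul, norm_inv, Real.norm_of_nonneg (Real.sqrt_nonneg _)]
  exact (mul_le_of_le_one_left (norm_nonneg _) (inv_le_one_of_one_le₀ hsqrt)).trans
    (abs_dampedSine_le _)

lemma summable_exp_neg_mul_sqrt (ha : 0 < a) :
    Summable fun k : ℕ ↦ Real.exp (-(a * √((k : ℝ) + 1))) := by
  simpa using summable_rpow_mul_exp_neg_mul_sqrt 0 ha

lemma summable_inv_sqrt_mul_dampedSine (ha : 0 < a) :
    Summable fun j : ℕ ↦ (√((j : ℝ) + 1))⁻¹ * dampedSine (a * √((j : ℝ) + 1)) :=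
  .of_norm_bounded (summable_exp_neg_mul_sqrt ha) (norm_inv_sqrt_mul_dampedSine_le a)

lemma hasDerivAt_sqrt_two_mul_dampedSineSum (ha : 0 < a) :
    HasDerivAt (fun a ↦ √2 * dampedSineSum a) (-(2 * ∑' k : ℕ,
      Real.exp (-(a * √((k : ℝ) + 1))) * Real.cos (a * √((k : ℝ) + 1)))) a := by
  simp only [dampedSineSum, ← tsum_mul_left, ← tsum_neg]
  have hmem : a ∈ Set.Ioi (a / 2) := half_lt_self ha
  refine hasDerivAt_tsum_of_isPreconnected (t := Set.Ioi (a / 2))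
    (g := fun (k : ℕ) a ↦ √2 * ((√((k : ℝ) + 1))⁻¹ * dampedSine (a * √((k : ℝ) + 1))))
    (g' := fun (k : ℕ) a ↦
      -(2 * (Real.exp (-(a * √((k : ℝ) + 1))) * Real.cos (a * √((k : ℝ) + 1)))))
    ((summable_exp_neg_mul_sqrt (half_pos ha)).mul_left 2) isOpen_Ioi isPreconnected_Ioi
    (fun k b _ ↦ ?_) (fun k b (hb : a / 2 < b) ↦ ?_) hmem
    ((summable_inv_sqrt_mul_dampedSine ha).mul_left _) hmem
  · have hk : √((k : ℝ) + 1) ≠ 0 := by positivity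
    convert! (((hasDerivAt_sqrt_two_mul_dampedSine (b * √((k : ℝ) + 1))).comp b
      ((hasDerivAt_id b).mul_const √((k : ℝ) + 1))).const_mul (√((k : ℝ) + 1))⁻¹) using 1
    · ext b
      simp only [Function.comp_apply, id]
      ring
    · field_simp
  · rw [norm_neg, norm_mul, norm_mul, Real.norm_of_nonneg zero_le_two,
      Real.norm_of_nonneg (Real.exp_nonneg _)]
    gcongr
    exact (mul_le_of_le_one_right (Real.exp_nonneg _) (Real.abs_cos_le_one _)).trans (by gcongr)

end DampedSine

section DampedSineSumAtZero

variable {a : ℝ}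

/-- The `j`-th term of `√2 * dampedSineSum a`, less the integral over `[j + 1, j + 2]` of the
function `√2 * dampedSine (a * √t) / √t` that is being summed. -/
noncomputable def dampedSineDefect (a : ℝ) (j : ℕ) : ℝ :=
  (√((j : ℝ) + 1))⁻¹ * (√2 * dampedSine (a * √((j : ℝ) + 1))) -
    (2 / a * (Real.exp (-(a * √((j : ℝ) + 1 + 1))) * Real.sin (a * √((j : ℝ) + 1 + 1))) -
      2 / a * (Real.exp (-(a * √((j : ℝ) + 1))) * Real.sin (a * √((j : ℝ) + 1))))

lemma hasDerivAt_inv_sqrt_mul_dampedSine (a : ℝ) {t : ℝ} (ht : 0 < t) :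
    HasDerivAt (fun t ↦ (√t)⁻¹ * (√2 * dampedSine (a * √t)))
      (-((t * √t)⁻¹ * (√2 * dampedSine (a * √t) / 2 +
        a * √t * Real.exp (-(a * √t)) * Real.cos (a * √t)))) t := by
  have hsq : √t ^ 2 = t := Real.sq_sqrt ht.le
  have hpos : 0 < √t := Real.sqrt_pos.2 ht
  convert! ((Real.hasDerivAt_sqrt ht.ne').inv hpos.ne').mul
    ((hasDerivAt_sqrt_two_mul_dampedSine (a * √t)).comp t (hasDerivAt_const_mul_sqrt a ht)) using 1
  simp only [Function.comp_apply, Pi.inv_apply]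
  field_simp
  rw [hsq]
  ring

lemma abs_dampedSine_add_le {v : ℝ} (hv : 0 ≤ v) :
    |√2 * dampedSine v / 2 + v * Real.exp (-v) * Real.cos v| ≤ 2 := by
  have hexp : Real.exp (-v) ≤ 1 := Real.exp_le_one_iff.2 (neg_nonpos.2 hv)
  have hsqrt : √2 ≤ 2 := Real.sqrt_le_iff.2 ⟨zero_le_two, by norm_num⟩
  have hfirst : |√2 * dampedSine v / 2| ≤ 1 := by
    rw [abs_div, abs_mul, abs_two, abs_of_nonneg (Real.sqrt_nonneg 2), div_le_one two_pos]
    exact (mul_le_mul hsqrt ((abs_dampedSine_le v).trans hexp) (abs_nonneg _)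
      zero_le_two).trans_eq (mul_one 2)
  have hmul : v * Real.exp (-v) ≤ 1 := by
    rw [Real.exp_neg, ← div_eq_mul_inv, div_le_one (Real.exp_pos v)]
    linarith [Real.add_one_le_exp v]
  have hsecond : |v * Real.exp (-v) * Real.cos v| ≤ 1 := by
    rw [abs_mul, abs_of_nonneg (by positivity)]
    exact mul_le_one₀ hmul (abs_nonneg _) (Real.abs_cos_le_one v)
  linarith [abs_add_le (√2 * dampedSine v / 2) (v * Real.exp (-v) * Real.cos v)]

lemma norm_dampedSineDefect_le (ha : 0 < a) (j : ℕ) :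
    ‖dampedSineDefect a j‖ ≤ 2 * ((j : ℝ) + 1) ^ (-(3 / 2) : ℝ) := by
  have hj : 0 < (j : ℝ) + 1 := by positivity
  refine norm_sub_sub_le_of_hasDerivAt (t := (j : ℝ) + 1)
    (H := fun t ↦ 2 / a * (Real.exp (-(a * √t)) * Real.sin (a * √t)))
    (fun t ht ↦ ?_) (fun t ht ↦ hasDerivAt_inv_sqrt_mul_dampedSine a (hj.trans_le ht.1))
    (fun t ht ↦ ?_) <;> have ht0 : 0 < t := hj.trans_le ht.1
  · convert! ((hasDerivAt_exp_neg_mul_sin (a * √t)).comp t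
      (hasDerivAt_const_mul_sqrt a ht0)).const_mul (2 / a) using 1
    field_simp
  · rw [norm_neg, norm_mul, Real.norm_of_nonneg (by positivity), inv_mul_sqrt_eq_rpow ht0,
      mul_comm (2 : ℝ), Real.norm_eq_abs]
    exact mul_le_mul (Real.rpow_le_rpow_of_nonpos hj ht.1 (by norm_num))
      (abs_dampedSine_add_le (by positivity)) (abs_nonneg _) (by positivity)

lemma sqrt_two_mul_dampedSine_zero : √2 * dampedSine 0 = 1 := by
  simp [sqrt_two_mul_dampedSine]

lemma tendsto_two_div_mul_exp_neg_mul_sin (c : ℝ) :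
    Tendsto (fun a ↦ 2 / a * (Real.exp (-(a * c)) * Real.sin (a * c))) (𝓝[>] 0) (𝓝 (2 * c)) := by
  have hderiv : HasDerivAt (fun a ↦ Real.exp (-(a * c)) * Real.sin (a * c)) c 0 := by
    convert! (hasDerivAt_exp_neg_mul_sin (0 * c)).comp 0 ((hasDerivAt_id 0).mul_const c) using 1
    rw [zero_mul, sqrt_two_mul_dampedSine_zero, one_mul, one_mul]
  have hslope := (hasDerivAt_iff_tendsto_slope_zero.1 hderiv).mono_left
    (nhdsWithin_mono 0 fun a (ha : 0 < a) ↦ ha.ne')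
  refine (hslope.const_mul 2).congr fun a ↦ ?_
  simp only [zero_add, zero_mul, neg_zero, Real.exp_zero, Real.sin_zero, mul_zero, sub_zero,
    smul_eq_mul]
  ring

lemma tendsto_dampedSineDefect (j : ℕ) :
    Tendsto (fun a ↦ dampedSineDefect a j) (𝓝[>] 0)
      (𝓝 ((√((j : ℝ) + 1))⁻¹ - 2 * (√((j : ℝ) + 1 + 1) - √((j : ℝ) + 1)))) := by
  have hcont : Continuous fun a ↦ (√((j : ℝ) + 1))⁻¹ * (√2 * dampedSine (a * √((j : ℝ) + 1))) := by
    unfold dampedSine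
    fun_prop
  rw [mul_sub]
  refine Tendsto.sub ((hcont.tendsto' 0 _ ?_).mono_left nhdsWithin_le_nhds)
    ((tendsto_two_div_mul_exp_neg_mul_sin _).sub (tendsto_two_div_mul_exp_neg_mul_sin _))
  rw [zero_mul, sqrt_two_mul_dampedSine_zero, mul_one]

lemma sqrt_two_mul_dampedSineSum_eq (ha : 0 < a) :
    √2 * dampedSineSum a =
      ∑' j, dampedSineDefect a j - 2 / a * (Real.exp (-(a * 1)) * Real.sin (a * 1)) := by
  set G : ℕ → ℝ := fun j ↦
    2 / a * (Real.exp (-(a * √((j : ℝ) + 1))) * Real.sin (a * √((j : ℝ) + 1)))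
  have hG : Tendsto G atTop (𝓝 0) := by
    have hlim := (summable_exp_neg_mul_sqrt ha).tendsto_atTop_zero.const_mul (2 / a)
    rw [mul_zero] at hlim
    refine squeeze_zero_norm (fun j ↦ ?_) hlim
    rw [norm_mul, norm_mul, Real.norm_of_nonneg (by positivity),
      Real.norm_of_nonneg (Real.exp_nonneg _)]
    gcongr
    exact mul_le_of_le_one_right (Real.exp_nonneg _) (Real.abs_sin_le_one _)
  have hterm (j : ℕ) : √2 * ((√((j : ℝ) + 1))⁻¹ * dampedSine (a * √((j : ℝ) + 1))) =
      dampedSineDefect a j + (G (j + 1) - G j) := by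
    simp only [G, dampedSineDefect, Nat.cast_add, Nat.cast_one]
    ring
  have hdefect : Summable (dampedSineDefect a) := .of_norm_bounded
    ((summable_add_one_rpow (by norm_num)).mul_left 2) (norm_dampedSineDefect_le ha)
  have hdiff : Summable fun j ↦ G (j + 1) - G j :=
    (((summable_inv_sqrt_mul_dampedSine ha).mul_left √2).sub hdefect).congr fun j ↦ by
      rw [hterm, add_sub_cancel_left]
  rw [dampedSineSum, ← tsum_mul_left, tsum_congr hterm, hdefect.tsum_add hdiff,
    tsum_succ_sub_eq_neg hG hdiff, sub_eq_add_neg]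
  simp [G]

theorem tendsto_sqrt_two_mul_dampedSineSum :
    Tendsto (fun a ↦ √2 * dampedSineSum a) (𝓝[>] 0) (𝓝 zetaHalf) := by
  have hsum : Tendsto (fun a ↦ ∑' j, dampedSineDefect a j) (𝓝[>] 0)
      (𝓝 (∑' j : ℕ, ((√((j : ℝ) + 1))⁻¹ - 2 * (√((j : ℝ) + 1 + 1) - √((j : ℝ) + 1))))) := by
    refine tendsto_tsum_of_dominated_convergence
      ((summable_add_one_rpow (by norm_num : (-(3 / 2) : ℝ) < -1)).mul_left 2)
      tendsto_dampedSineDefect ?_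
    filter_upwards [self_mem_nhdsWithin] with a ha j using norm_dampedSineDefect_le ha j
  have hlim := hsum.sub (tendsto_two_div_mul_exp_neg_mul_sin 1)
  rw [mul_one] at hlim
  refine hlim.congr' ?_
  filter_upwards [self_mem_nhdsWithin] with a ha using (sqrt_two_mul_dampedSineSum_eq ha).symm

end DampedSineSumAtZero

section Reciprocity

variable {b : ℝ}

/-- The series `∑ d ^ (-1/2) * (e ^ (-b / d) - 1)` over `d ≥ 1`. -/
noncomputable def expDefectSum (b : ℝ) : ℝ :=
  ∑' d : ℕ, (√((d : ℝ) + 1))⁻¹ * (Real.exp (-(b / ((d : ℝ) + 1))) - 1)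

lemma norm_inv_sqrt_mul_exp_sub_one_le (hb : 0 ≤ b) (d : ℕ) :
    ‖(√((d : ℝ) + 1))⁻¹ * (Real.exp (-(b / ((d : ℝ) + 1))) - 1)‖ ≤
      b * ((d : ℝ) + 1) ^ (-(3 / 2) : ℝ) := by
  have hexp : ‖Real.exp (-(b / ((d : ℝ) + 1))) - 1‖ ≤ b / ((d : ℝ) + 1) := by
    have hle : Real.exp (-(b / ((d : ℝ) + 1))) ≤ 1 :=
      Real.exp_le_one_iff.2 (neg_nonpos.2 (by positivity))
    rw [Real.norm_of_nonpos (by linarith)]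
    linarith [Real.add_one_le_exp (-(b / ((d : ℝ) + 1)))]
  rw [norm_mul, ← inv_mul_sqrt_eq_rpow (by positivity), Real.norm_of_nonneg (by positivity)]
  calc (√((d : ℝ) + 1))⁻¹ * ‖Real.exp (-(b / ((d : ℝ) + 1))) - 1‖
      ≤ (√((d : ℝ) + 1))⁻¹ * (b / ((d : ℝ) + 1)) := by gcongr
    _ = b * (((d : ℝ) + 1) * √((d : ℝ) + 1))⁻¹ := by field_simp

lemma summable_mul_add_one_rpow (b : ℝ) :
    Summable fun d : ℕ ↦ b * ((d : ℝ) + 1) ^ (-(3 / 2) : ℝ) :=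
  (summable_add_one_rpow (by norm_num)).mul_left b

lemma hasDerivAt_expDefectSum (hb : 0 < b) :
    HasDerivAt expDefectSum (-∑' d : ℕ, levyKernel b ((d : ℝ) + 1)) b := by
  rw [← tsum_neg]
  refine hasDerivAt_tsum_of_isPreconnected (t := Set.Ioi 0) (summable_mul_add_one_rpow 1)
    (g := fun (d : ℕ) b ↦ (√((d : ℝ) + 1))⁻¹ * (Real.exp (-(b / ((d : ℝ) + 1))) - 1))
    (g' := fun (d : ℕ) b ↦ -levyKernel b ((d : ℝ) + 1)) isOpen_Ioi isPreconnected_Ioi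
    (fun d c _ ↦ ?_) (fun d c (hc : 0 < c) ↦ ?_) hb
    (.of_norm_bounded (summable_mul_add_one_rpow b) (norm_inv_sqrt_mul_exp_sub_one_le hb.le)) hb
  · convert! ((((hasDerivAt_id c).div_const ((d : ℝ) + 1)).neg.exp).sub_const 1).const_mul
      (√((d : ℝ) + 1))⁻¹ using 1
    simp only [levyKernel, mul_inv, id, Pi.neg_apply]
    ring
  · rw [norm_neg, Real.norm_of_nonneg (levyKernel_nonneg _ _), one_mul]
    exact levyKernel_le_rpow hc (by positivity)

lemma tendsto_expDefectSum : Tendsto expDefectSum (𝓝[>] 0) (𝓝 0) := by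
  have hbound : ∀ᶠ b in 𝓝[>] 0,
      ‖expDefectSum b‖ ≤ b * ∑' d : ℕ, ((d : ℝ) + 1) ^ (-(3 / 2) : ℝ) := by
    filter_upwards [self_mem_nhdsWithin] with b (hb : 0 < b)
    rw [← tsum_mul_left]
    exact tsum_of_norm_bounded (summable_mul_add_one_rpow b).hasSum
      (norm_inv_sqrt_mul_exp_sub_one_le hb.le)
  refine squeeze_zero_norm' hbound ?_
  exact ((continuous_mul_const _).tendsto' 0 0 (zero_mul _)).mono_left nhdsWithin_le_nhds

lemma hasDerivAt_expDefectSum_add {a : ℝ} (ha : 0 < a) :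
    HasDerivAt (fun a ↦ expDefectSum (a ^ 2 / (4 * π)) + a) (-(2 * ∑' k : ℕ,
      Real.exp (-(a * √((k : ℝ) + 1))) * Real.cos (a * √((k : ℝ) + 1)))) a := by
  have hsq : HasDerivAt (fun a : ℝ ↦ a ^ 2 / (4 * π)) (a / (2 * π)) a := by
    convert! (hasDerivAt_pow 2 a).div_const (4 * π) using 1
    field_simp
    ring
  convert! ((hasDerivAt_expDefectSum (by positivity)).comp a hsq).add (hasDerivAt_id a) using 1
  rw [tsum_levyKernel ha]
  field_simp
  ring

/-- The two sides have the same derivative, by Poisson summation for the Lévy kernel, and the same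
limit at `0`. -/
theorem expDefectSum_reciprocity {a : ℝ} (ha : 0 < a) :
    expDefectSum (a ^ 2 / (4 * π)) + a + zetaHalf = √2 * dampedSineSum a := by
  set D : ℝ → ℝ := fun a ↦ expDefectSum (a ^ 2 / (4 * π)) + a - √2 * dampedSineSum a
  have hderiv (b : ℝ) (hb : 0 < b) : HasDerivAt D 0 b := by
    exact ((hasDerivAt_expDefectSum_add hb).fun_sub
      (hasDerivAt_sqrt_two_mul_dampedSineSum hb)).congr_deriv (sub_self _)
  have hconst (b : ℝ) (hb : 0 < b) : D b = D a :=
    isOpen_Ioi.is_const_of_deriv_eq_zero isPreconnected_Ioi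
      (fun c hc ↦ (hderiv c hc).differentiableAt.differentiableWithinAt)
      (fun c hc ↦ (hderiv c hc).deriv) hb ha
  have hsq : Tendsto (fun a : ℝ ↦ a ^ 2 / (4 * π)) (𝓝[>] 0) (𝓝[>] 0) := by
    have hcont : Continuous fun a : ℝ ↦ a ^ 2 / (4 * π) := by fun_prop
    refine tendsto_nhdsWithin_iff.2
      ⟨(hcont.tendsto' 0 0 (by simp)).mono_left nhdsWithin_le_nhds, ?_⟩
    filter_upwards [self_mem_nhdsWithin] with b (hb : 0 < b)
    exact Set.mem_Ioi.2 (by positivity)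
  have hlim : Tendsto D (𝓝[>] 0) (𝓝 (0 + 0 - zetaHalf)) :=
    ((tendsto_expDefectSum.comp hsq).add (tendsto_id.mono_left nhdsWithin_le_nhds)).sub
      tendsto_sqrt_two_mul_dampedSineSum
  have hlim' : Tendsto D (𝓝[>] 0) (𝓝 (D a)) := tendsto_const_nhds.congr' <| by
    filter_upwards [self_mem_nhdsWithin] with b hb using (hconst b hb).symm
  linarith [tendsto_nhds_unique hlim hlim', show D a = _ from rfl]

end Reciprocity

section ExpDefectDoubleSeries

variable {ν : ℂ} {x : ℝ}

lemma hasSum_add_one_cpow (hν : ν.re < -1) :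
    HasSum (fun k : ℕ ↦ ((k : ℂ) + 1) ^ ν) (riemannZeta (-ν)) := by
  have hsum : Summable fun k : ℕ ↦ ((k : ℂ) + 1) ^ ν :=
    .of_norm_bounded (summable_add_one_rpow hν) fun k ↦ (norm_natCast_add_one_cpow k ν).le
  convert hsum.hasSum using 1
  rw [zeta_eq_tsum_one_div_nat_add_one_cpow (by simp; linarith)]
  exact tsum_congr fun k ↦ by rw [cpow_neg, one_div, inv_inv]

lemma ofReal_sqrt_add_one (k : ℕ) : (√((k : ℝ) + 1) : ℂ) = ((k : ℂ) + 1) ^ (1 / 2 : ℂ) := by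
  rw [← ofReal_cpow_half (by positivity)]
  push_cast
  rfl

lemma ofReal_inv_sqrt_add_one (k : ℕ) :
    ((√((k : ℝ) + 1))⁻¹ : ℂ) = ((k : ℂ) + 1) ^ (-(1 / 2) : ℂ) := by
  rw [ofReal_sqrt_add_one, cpow_neg]

lemma norm_cexp_neg_sub_one_le_rpow {u θ : ℝ} (hu : 0 < u) (hθ₀ : 0 ≤ θ) (hθ₁ : θ ≤ 1) :
    ‖cexp (-u) - 1‖ ≤ u ^ θ := by
  have hle : Real.exp (-u) ≤ 1 := Real.exp_le_one_iff.2 (by linarith)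
  have hnorm : ‖cexp (-u) - 1‖ = 1 - Real.exp (-u) := by
    rw [← ofReal_neg, ← ofReal_exp, ← ofReal_one, ← ofReal_sub, norm_real,
      Real.norm_of_nonpos (by linarith), neg_sub]
  rw [hnorm]
  rcases le_total u 1 with hu1 | hu1
  · have hpow : u ^ (1 : ℝ) ≤ u ^ θ := Real.rpow_le_rpow_of_exponent_ge hu hu1 hθ₁
    rw [Real.rpow_one] at hpow
    linarith [Real.add_one_le_exp (-u)]
  · linarith [Real.one_le_rpow hu1 hθ₀, Real.exp_pos (-u)]

/-- The terms of a double series whose sum over `d` is a value of `expDefectSum` and whose sum over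
`k` is, up to a power of `d`, a value of `polylogRemainder`. -/
noncomputable def expDefectTerm (ν : ℂ) (x : ℝ) (d k : ℕ) : ℂ :=
  ((d : ℂ) + 1) ^ (-(1 / 2) : ℂ) *
    (((k : ℂ) + 1) ^ (ν - 1) * (cexp (-(2 * π * (x / (d + 1) : ℝ) * (k + 1))) - 1))

lemma norm_expDefectTerm_le (hx : 0 < x) {θ : ℝ} (hθ₀ : 0 ≤ θ) (hθ₁ : θ ≤ 1) (d k : ℕ) :
    ‖expDefectTerm ν x d k‖ ≤
      (2 * π * x) ^ θ * (((d : ℝ) + 1) ^ (-(1 / 2) - θ) * ((k : ℝ) + 1) ^ (ν.re - 1 + θ)) := by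
  have hd : 0 < (d : ℝ) + 1 := by positivity
  have hk : 0 < (k : ℝ) + 1 := by positivity
  have hexp := norm_cexp_neg_sub_one_le_rpow (u := 2 * π * (x / (d + 1)) * (k + 1))
    (by positivity) hθ₀ hθ₁
  have hpow : (2 * π * (x / (d + 1)) * (k + 1)) ^ θ =
      (2 * π * x) ^ θ * ((d : ℝ) + 1) ^ (-θ) * ((k : ℝ) + 1) ^ θ := by
    rw [Real.rpow_neg hd.le, ← div_eq_mul_inv, ← Real.div_rpow (by positivity) hd.le,
      ← Real.mul_rpow (by positivity) hk.le, mul_div_assoc]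
  have hd_re : (-(1 / 2) : ℂ).re = -(1 / 2) := by norm_num
  rw [expDefectTerm, norm_mul, norm_mul, norm_natCast_add_one_cpow, norm_natCast_add_one_cpow,
    hd_re, sub_re, one_re]
  push_cast at hexp ⊢
  calc _ ≤ ((d : ℝ) + 1) ^ (-(1 / 2) : ℝ) *
        (((k : ℝ) + 1) ^ (ν.re - 1) * (2 * π * (x / (d + 1)) * (k + 1)) ^ θ) := by gcongr
    _ = _ := by
      rw [hpow, sub_eq_add_neg _ θ, Real.rpow_add hd, Real.rpow_add hk]
      ring

lemma summable_expDefectTerm (hx : 0 < x) (hν : -1 < ν.re) (hν' : ν.re < -1 / 2) :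
    Summable fun p : ℕ × ℕ ↦ expDefectTerm ν x p.1 p.2 := by
  obtain ⟨θ, hθ, hθν⟩ := exists_between (show 1 / 2 < -ν.re by linarith)
  have hprod := (summable_add_one_rpow (a := -(1 / 2) - θ) (by linarith)).mul_of_nonneg
    (summable_add_one_rpow (a := ν.re - 1 + θ) (by linarith)) (fun _ ↦ by positivity)
    fun _ ↦ by positivity
  exact .of_norm_bounded (hprod.mul_left ((2 * π * x) ^ θ)) fun p ↦
    norm_expDefectTerm_le hx (by linarith) (by linarith) p.1 p.2

lemma polylogRemainder_eq_of_re_neg {y : ℝ} (hν : ν.re < 0) (hy : 0 ≤ y) :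
    polylogRemainder ν y = ∑' k : ℕ, ((k : ℂ) + 1) ^ (ν - 1) *
      (cexp (-(2 * π * y * (k + 1))) - 1) - Gamma ν * (2 * π) ^ (-ν) * (y : ℂ) ^ (-ν) := by
  have hzeta := hasSum_add_one_cpow (ν := ν - 1) (by simp; linarith)
  have hexp : Summable fun k : ℕ ↦ ((k : ℂ) + 1) ^ (ν - 1) * cexp (-(2 * π * y * (k + 1))) := by
    refine .of_norm_bounded hzeta.summable.norm fun k ↦ ?_
    rw [norm_mul, Complex.norm_exp]
    refine mul_le_of_le_one_right (norm_nonneg _) (Real.exp_le_one_iff.2 ?_)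
    have : 0 ≤ 2 * π * y * (k + 1) := by positivity
    simpa using this
  rw [neg_sub] at hzeta
  simp only [mul_sub, mul_one]
  rw [polylogRemainder, hexp.tsum_sub hzeta.summable, hzeta.tsum_eq, sub_right_comm]

lemma ofReal_div_add_one_cpow (x : ℝ) (d : ℕ) (w : ℂ) :
    ((x / (d + 1) : ℝ) : ℂ) ^ w = (x : ℂ) ^ w * ((d : ℂ) + 1) ^ (-w) := by
  have hd : 0 < (d : ℝ) + 1 := by positivity
  have hmul := ofReal_mul_cpow hd ((x / (d + 1) : ℝ) : ℂ) w
  have hne : ((d : ℂ) + 1) ^ w ≠ 0 := by simp [cpow_eq_zero_iff, Nat.cast_add_one_ne_zero]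
  rw [← ofReal_mul, mul_div_cancel₀ _ hd.ne', ofReal_add, ofReal_natCast, ofReal_one] at hmul
  rw [hmul, mul_right_comm, cpow_neg, mul_inv_cancel₀ hne, one_mul]

lemma cpow_mul_polylogRemainder_eq_tsum (hx : 0 < x) (hν : ν.re < 0) (d : ℕ) :
    ((d : ℂ) + 1) ^ (-(1 / 2) : ℂ) * polylogRemainder ν (x / (d + 1)) =
      ∑' k, expDefectTerm ν x d k -
        Gamma ν * (2 * π) ^ (-ν) * (x : ℂ) ^ (-ν) * ((d : ℂ) + 1) ^ (ν - 1 / 2) := by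
  rw [polylogRemainder_eq_of_re_neg hν (by positivity), ofReal_div_add_one_cpow,
    show ν - 1 / 2 = -(1 / 2) + ν by ring, cpow_add _ _ d.cast_add_one_ne_zero, neg_neg, mul_sub,
    ← tsum_mul_left]
  simp only [expDefectTerm]
  ring

lemma tsum_expDefectTerm_left (ν : ℂ) (x : ℝ) (k : ℕ) :
    ∑' d, expDefectTerm ν x d k = ((k : ℂ) + 1) ^ (ν - 1) * expDefectSum (2 * π * x * (k + 1)) := by
  rw [expDefectSum, ofReal_tsum, ← tsum_mul_left]
  refine tsum_congr fun d ↦ ?_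
  rw [expDefectTerm]
  push_cast
  rw [ofReal_inv_sqrt_add_one, show (2 * π * (x / (d + 1)) * (k + 1) : ℂ) =
    2 * π * x * (k + 1) / (d + 1) by ring]
  ring

end ExpDefectDoubleSeries

section ReciprocitySeries

variable {ν : ℂ} {a x : ℝ}

lemma norm_inv_sqrt_mul_dampedSine_mul_le (ha : 0 < a) (k j : ℕ) :
    ‖(√((j : ℝ) + 1))⁻¹ * dampedSine (a * √((k : ℝ) + 1) * √((j : ℝ) + 1))‖ ≤
      Real.exp (-(a / 2 * √((k : ℝ) + 1))) * Real.exp (-(a / 2 * √((j : ℝ) + 1))) := by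
  refine (norm_inv_sqrt_mul_dampedSine_le _ j).trans ?_
  have hk : 1 ≤ √((k : ℝ) + 1) := Real.one_le_sqrt.2 (by simp)
  have hj : 1 ≤ √((j : ℝ) + 1) := Real.one_le_sqrt.2 (by simp)
  have hprod : √((k : ℝ) + 1) + √((j : ℝ) + 1) ≤ 2 * (√((k : ℝ) + 1) * √((j : ℝ) + 1)) := by
    nlinarith
  rw [← Real.exp_add]
  exact Real.exp_le_exp.2 (by nlinarith)

lemma norm_dampedSineSum_le (ha : 0 < a) (k : ℕ) :
    ‖dampedSineSum (a * √((k : ℝ) + 1))‖ ≤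
      Real.exp (-(a / 2 * √((k : ℝ) + 1))) * ∑' j : ℕ, Real.exp (-(a / 2 * √((j : ℝ) + 1))) := by
  rw [← tsum_mul_left]
  exact tsum_of_norm_bounded ((summable_exp_neg_mul_sqrt (half_pos ha)).mul_left _).hasSum
    (norm_inv_sqrt_mul_dampedSine_mul_le ha k)

lemma summable_rpow_mul_norm_dampedSineSum (ha : 0 < a) (r : ℝ) :
    Summable fun k : ℕ ↦ ((k : ℝ) + 1) ^ r * ‖(dampedSineSum (a * √((k : ℝ) + 1)) : ℂ)‖ := by
  refine .of_nonneg_of_le (fun k ↦ by positivity) (fun k ↦ ?_)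
    ((summable_rpow_mul_exp_neg_mul_sqrt r (half_pos ha)).mul_right
      (∑' j : ℕ, Real.exp (-(a / 2 * √((j : ℝ) + 1)))))
  rw [norm_real, mul_assoc]
  exact mul_le_mul_of_nonneg_left (norm_dampedSineSum_le ha k) (by positivity)

lemma summable_cpow_mul_dampedSineSum (ha : 0 < a) (w : ℂ) :
    Summable fun k : ℕ ↦ ((k : ℂ) + 1) ^ w * dampedSineSum (a * √((k : ℝ) + 1)) :=
  .of_norm <| (summable_rpow_mul_norm_dampedSineSum ha w.re).congr fun k ↦ by
    rw [norm_mul, norm_natCast_add_one_cpow]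

/-- The frequency `2π√(2x)` of the trigonometric factor in Ramanujan's series. -/
noncomputable def dampedSineFrequency (x : ℝ) : ℝ := 2 * π * √(2 * x)

lemma dampedSineFrequency_pos (hx : 0 < x) : 0 < dampedSineFrequency x := by
  unfold dampedSineFrequency
  positivity

lemma expDefectSum_two_pi_mul (hx : 0 < x) (k : ℕ) :
    (expDefectSum (2 * π * x * (k + 1)) : ℂ) =
      √2 * dampedSineSum (dampedSineFrequency x * √((k : ℝ) + 1)) -
        dampedSineFrequency x * ((k : ℂ) + 1) ^ (1 / 2 : ℂ) - riemannZeta (1 / 2) := by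
  have hk : 0 < (k : ℝ) + 1 := by positivity
  have hpos : 0 < dampedSineFrequency x * √((k : ℝ) + 1) :=
    mul_pos (dampedSineFrequency_pos hx) (by positivity)
  have harg : (dampedSineFrequency x * √((k : ℝ) + 1)) ^ 2 / (4 * π) = 2 * π * x * (k + 1) := by
    rw [dampedSineFrequency, mul_pow, mul_pow, Real.sq_sqrt (by positivity), Real.sq_sqrt hk.le]
    field_simp
    ring
  have hrec := expDefectSum_reciprocity hpos
  rw [harg] at hrec
  rw [eq_sub_of_add_eq (eq_sub_of_add_eq hrec), riemannZeta_half, ← ofReal_sqrt_add_one]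
  push_cast
  ring

lemma tsum_polylogRemainder_of_re_lt (hx : 0 < x) (hν : -1 < ν.re) (hν' : ν.re < -1 / 2) :
    ∑' d : ℕ, ((d : ℂ) + 1) ^ (-(1 / 2) : ℂ) * polylogRemainder ν (x / (d + 1)) +
        Gamma ν * (2 * π) ^ (-ν) * (x : ℂ) ^ (-ν) * riemannZeta (1 / 2 - ν) +
        riemannZeta (1 / 2) * riemannZeta (1 - ν) =
      √2 * ∑' k : ℕ, ((k : ℂ) + 1) ^ (ν - 1) *
          dampedSineSum (dampedSineFrequency x * √((k : ℝ) + 1)) -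
        dampedSineFrequency x * riemannZeta (1 / 2 - ν) := by
  have hzeta := hasSum_add_one_cpow (ν := ν - 1) (by simp; linarith)
  have hzeta_half := hasSum_add_one_cpow (ν := ν - 1 / 2) (by norm_num; linarith)
  rw [neg_sub] at hzeta hzeta_half
  have hterm := summable_expDefectTerm hx hν hν'
  have hsine := summable_cpow_mul_dampedSineSum (dampedSineFrequency_pos hx) (ν - 1)
  have hk (k : ℕ) : ∑' d, expDefectTerm ν x d k =
      √2 * (((k : ℂ) + 1) ^ (ν - 1) * dampedSineSum (dampedSineFrequency x * √((k : ℝ) + 1))) -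
        dampedSineFrequency x * ((k : ℂ) + 1) ^ (ν - 1 / 2) -
        riemannZeta (1 / 2) * ((k : ℂ) + 1) ^ (ν - 1) := by
    rw [tsum_expDefectTerm_left, expDefectSum_two_pi_mul hx, show ν - 1 / 2 = ν - 1 + 1 / 2 by ring,
      cpow_add _ _ k.cast_add_one_ne_zero]
    ring
  have hd : Summable fun d ↦ ∑' k, expDefectTerm ν x d k := hterm.prod
  rw [tsum_congr (cpow_mul_polylogRemainder_eq_tsum hx (by linarith)),
    hd.tsum_sub (hzeta_half.summable.mul_left _), tsum_mul_left, hzeta_half.tsum_eq,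
    ← hterm.tsum_comm (f := expDefectTerm ν x), tsum_congr hk,
    ((hsine.mul_left _).sub (hzeta_half.summable.mul_left _)).tsum_sub (hzeta.summable.mul_left _),
    (hsine.mul_left _).tsum_sub (hzeta_half.summable.mul_left _), tsum_mul_left, tsum_mul_left,
    tsum_mul_left, hzeta.tsum_eq, hzeta_half.tsum_eq]
  ring

end ReciprocitySeries

section ContinuedReciprocity

variable {ν : ℂ} {x : ℝ}

lemma differentiableAt_riemannZeta_sub {c : ℂ} (h : ν ≠ c - 1) :
    DifferentiableAt ℂ (fun ν ↦ riemannZeta (c - ν)) ν :=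
  (differentiableAt_riemannZeta fun hc ↦ h (by rw [← hc, sub_sub_cancel])).comp ν
    (differentiableAt_id.const_sub c)

lemma summable_weighted_rpow {ρ : ℝ} (hρ : 0 < ρ) (x : ℝ) :
    Summable fun p : ℕ × ℕ ↦ ‖((p.1 : ℂ) + 1) ^ (-(1 / 2) : ℂ)‖ * ((p.2 : ℝ) + 1) ^ (-(1 + ρ)) *
      (x / (p.1 + 1)) ^ 2 := by
  have hprod := (summable_add_one_rpow (a := -(5 / 2)) (by norm_num)).mul_of_nonneg
    (summable_add_one_rpow (a := -(1 + ρ)) (by linarith)) (fun _ ↦ by positivity)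
    fun _ ↦ by positivity
  refine (hprod.mul_left (x ^ 2)).congr fun p ↦ ?_
  have hp : 0 < (p.1 : ℝ) + 1 := by positivity
  have hre : (-(1 / 2) : ℂ).re = -(1 / 2) := by norm_num
  rw [norm_natCast_add_one_cpow, hre, show (-(5 / 2) : ℝ) = -(1 / 2) - 2 by norm_num,
    Real.rpow_sub hp, Real.rpow_two]
  field_simp

lemma tsum_cpow_mul_polylogRemainder (hν : ν ∈ continuationDomain) (hx : 0 < x) :
    ∑' d : ℕ, ((d : ℂ) + 1) ^ (-(1 / 2) : ℂ) * polylogRemainder ν (x / (d + 1)) =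
      -(2 * π * x * riemannZeta (-ν) * riemannZeta (3 / 2)) + Gamma ν * (2 * π) ^ (-ν) *
        ∑' p : ℕ × ℕ, ((p.1 : ℂ) + 1) ^ (-(1 / 2) : ℂ) *
          conjCpowSumRemainder ν (x / (p.1 + 1)) (p.2 + 1) := by
  have hre := neg_one_lt_re_of_mem_continuationDomain hν
  have hrem : Summable fun p : ℕ × ℕ ↦ ((p.1 : ℂ) + 1) ^ (-(1 / 2) : ℂ) *
      conjCpowSumRemainder ν (x / (p.1 + 1)) (p.2 + 1) :=
    summable_mul_conjCpowSumRemainder (fun _ ↦ by positivity) (by simp)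
      (fun ρ hρ ↦ summable_weighted_rpow hρ x) hre
  have hrem_d : Summable fun d : ℕ ↦ ∑' m : ℕ, ((d : ℂ) + 1) ^ (-(1 / 2) : ℂ) *
      conjCpowSumRemainder ν (x / (d + 1)) (m + 1) := hrem.prod
  have hzeta := hasSum_add_one_cpow (ν := -(3 / 2)) (by norm_num)
  rw [neg_neg] at hzeta
  have hterm (d : ℕ) : ((d : ℂ) + 1) ^ (-(1 / 2) : ℂ) * polylogRemainder ν (x / (d + 1)) =
      -(2 * π * x * riemannZeta (-ν)) * ((d : ℂ) + 1) ^ (-(3 / 2) : ℂ) +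
        Gamma ν * (2 * π) ^ (-ν) * ∑' m : ℕ, ((d : ℂ) + 1) ^ (-(1 / 2) : ℂ) *
          conjCpowSumRemainder ν (x / (d + 1)) (m + 1) := by
    have hd : (d : ℂ) + 1 ≠ 0 := d.cast_add_one_ne_zero
    rw [polylogRemainder_eq hν (by positivity), tsum_mul_left,
      show (-(3 / 2) : ℂ) = -(1 / 2) - 1 by norm_num, cpow_sub _ _ hd, cpow_one]
    push_cast
    ring
  rw [tsum_congr hterm, (hzeta.summable.mul_left _).tsum_add (hrem_d.mul_left _), tsum_mul_left,
    tsum_mul_left, hzeta.tsum_eq, ← hrem.tsum_prod]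
  ring

lemma differentiableOn_tsum_cpow_mul_polylogRemainder (hx : 0 < x) : DifferentiableOn ℂ
    (fun ν ↦ ∑' d : ℕ, ((d : ℂ) + 1) ^ (-(1 / 2) : ℂ) * polylogRemainder ν (x / (d + 1)))
    continuationDomain := by
  have hrem := differentiableOn_tsum_conjCpowSumRemainder (ι := ℕ × ℕ)
    (w := fun p ↦ ((p.1 : ℂ) + 1) ^ (-(1 / 2) : ℂ)) (y := fun p ↦ x / (p.1 + 1))
    (v := fun p ↦ (p.2 : ℝ) + 1) (fun _ ↦ by positivity) (by simp)
    fun ρ hρ ↦ summable_weighted_rpow hρ x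
  refine DifferentiableOn.congr (fun ν hν ↦ ?_) fun ν hν ↦ tsum_cpow_mul_polylogRemainder hν hx
  refine ((((differentiableAt_riemannZeta_neg hν).const_mul _).mul_const _).neg.add
    ((differentiableAt_Gamma_mul_cpow_neg two_pi_ne_zero hν).mul
      (hrem.differentiableAt ?_))).differentiableWithinAt
  exact (isOpen_lt continuous_const continuous_re).mem_nhds
    (neg_one_lt_re_of_mem_continuationDomain hν)

lemma differentiableAt_riemannZeta_one_sub (hν : ν ∈ continuationDomain) :
    DifferentiableAt ℂ (fun ν ↦ riemannZeta (1 - ν)) ν :=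
  differentiableAt_riemannZeta_sub (by simpa using ne_zero_of_mem_continuationDomain hν)

lemma differentiableAt_riemannZeta_half_sub (hν : ν ∈ continuationDomain) :
    DifferentiableAt ℂ (fun ν ↦ riemannZeta (1 / 2 - ν)) ν := by
  refine differentiableAt_riemannZeta_sub ?_
  convert ne_ofReal_of_mem_continuationDomain hν (r := -(1 / 2)) (by norm_num) using 1
  norm_num

theorem tsum_polylogRemainder_add (hν : ν ∈ continuationDomain) (hx : 0 < x) :
    ∑' d : ℕ, ((d : ℂ) + 1) ^ (-(1 / 2) : ℂ) * polylogRemainder ν (x / (d + 1)) +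
        Gamma ν * (2 * π) ^ (-ν) * (x : ℂ) ^ (-ν) * riemannZeta (1 / 2 - ν) +
        riemannZeta (1 / 2) * riemannZeta (1 - ν) =
      √2 * ∑' k : ℕ, ((k : ℂ) + 1) ^ (ν - 1) *
          dampedSineSum (dampedSineFrequency x * √((k : ℝ) + 1)) -
        dampedSineFrequency x * riemannZeta (1 / 2 - ν) := by
  have hleft : DifferentiableOn ℂ (fun ν ↦
      ∑' d : ℕ, ((d : ℂ) + 1) ^ (-(1 / 2) : ℂ) * polylogRemainder ν (x / (d + 1)) +
        Gamma ν * (2 * π) ^ (-ν) * (x : ℂ) ^ (-ν) * riemannZeta (1 / 2 - ν) +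
        riemannZeta (1 / 2) * riemannZeta (1 - ν)) continuationDomain := by
    refine ((differentiableOn_tsum_cpow_mul_polylogRemainder hx).fun_add fun ν hν ↦ ?_).fun_add
      fun ν hν ↦
        ((differentiableAt_riemannZeta_one_sub hν).const_mul _).differentiableWithinAt
    exact (((differentiableAt_Gamma_mul_cpow_neg two_pi_ne_zero hν).fun_mul
      (differentiableAt_id.neg.const_cpow (.inl (ofReal_ne_zero.2 hx.ne')))).fun_mul
      (differentiableAt_riemannZeta_half_sub hν)).differentiableWithinAt
  have hright : DifferentiableOn ℂ (fun ν ↦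
      √2 * ∑' k : ℕ, ((k : ℂ) + 1) ^ (ν - 1) *
          dampedSineSum (dampedSineFrequency x * √((k : ℝ) + 1)) -
        dampedSineFrequency x * riemannZeta (1 / 2 - ν)) continuationDomain :=
    fun ν hν ↦ (((differentiable_tsum_cpow_mul (summable_rpow_mul_norm_dampedSineSum
      (dampedSineFrequency_pos hx)) ν).const_mul _).fun_sub
      ((differentiableAt_riemannZeta_half_sub hν).const_mul _)).differentiableWithinAt
  refine eqOn_continuationDomain hleft hright (z := ((-3 / 4 : ℝ) : ℂ) + I)
    (.inr (by norm_num)) ?_ hν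
  filter_upwards [(isOpen_lt continuous_const continuous_re).mem_nhds
    (show (-1 : ℝ) < (((-3 / 4 : ℝ) : ℂ) + I).re by norm_num),
    (isOpen_lt continuous_re continuous_const).mem_nhds
    (show (((-3 / 4 : ℝ) : ℂ) + I).re < -1 / 2 by norm_num)] with ν hν hν'
  exact tsum_polylogRemainder_of_re_lt hx hν hν'

end ContinuedReciprocity

section DivisorSums

variable {ν : ℂ} {x a : ℝ}

lemma hasSum_csigma_mul {s : ℂ} {h : ℕ → ℂ}
    (hsum : Summable fun p : ℕ × ℕ ↦ ((p.1 : ℂ) + 1) ^ s * h ((p.1 + 1) * (p.2 + 1))) :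
    HasSum (fun n : ℕ ↦ csigma s (n + 1) * h (n + 1))
      (∑' d : ℕ, ∑' m : ℕ, ((d : ℂ) + 1) ^ s * h ((d + 1) * (m + 1))) := by
  have hprod := hsum.hasSum
  rw [hsum.tsum_prod] at hprod
  have hpnat : HasSum (fun p : ℕ+ × ℕ+ ↦ ((p.1 : ℕ) : ℂ) ^ s * h (p.1 * p.2))
      (∑' d : ℕ, ∑' m : ℕ, ((d : ℂ) + 1) ^ s * h ((d + 1) * (m + 1))) := by
    rw [← (Equiv.pnatEquivNat.symm.prodCongr Equiv.pnatEquivNat.symm).hasSum_iff]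
    simpa [Function.comp_def] using hprod
  rw [← sigmaAntidiagonalEquivProd.hasSum_iff] at hpnat
  rw [← hasSum_pnat_iff_hasSum_succ (f := fun n ↦ csigma s n * h n)]
  refine hpnat.sigma fun n ↦ ?_
  have hfactor (c : Nat.divisorsAntidiagonal n) :
      ((fun p : ℕ+ × ℕ+ ↦ ((p.1 : ℕ) : ℂ) ^ s * h (p.1 * p.2)) ∘ sigmaAntidiagonalEquivProd)
        ⟨n, c⟩ = (c.1.1 : ℂ) ^ s * h n := by
    simp [sigmaAntidiagonalEquivProd, divisorsAntidiagonalFactors,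
      (Nat.mem_divisorsAntidiagonal.1 c.2).1]
  have hdivisors : csigma s n * h n =
      ∑ c : Nat.divisorsAntidiagonal n, (c.1.1 : ℂ) ^ s * h n := by
    rw [Finset.univ_eq_attach, Finset.sum_attach _ fun c : ℕ × ℕ ↦ (c.1 : ℂ) ^ s * h n,
      Nat.sum_divisorsAntidiagonal fun d _ ↦ (d : ℂ) ^ s * h n, csigma, Finset.sum_mul]
  rw [hdivisors, funext hfactor]
  exact hasSum_fintype _

lemma cpow_mul_inv_sqrt_mul_dampedSine (s : ℂ) (a : ℝ) (k j : ℕ) :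
    ((k : ℂ) + 1) ^ s * (((√((k + 1) * (j + 1) : ℕ))⁻¹ *
        dampedSine (a * √((k + 1) * (j + 1) : ℕ)) : ℝ) : ℂ) =
      ((k : ℂ) + 1) ^ (s - 1 / 2) * (((√((j : ℝ) + 1))⁻¹ *
        dampedSine (a * √((k : ℝ) + 1) * √((j : ℝ) + 1)) : ℝ) : ℂ) := by
  have hsqrt : √((k + 1) * (j + 1) : ℕ) = √((k : ℝ) + 1) * √((j : ℝ) + 1) := by
    push_cast
    exact Real.sqrt_mul (by positivity) _
  rw [hsqrt, sub_eq_add_neg, cpow_add _ _ k.cast_add_one_ne_zero, ← ofReal_inv_sqrt_add_one,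
    mul_inv, mul_assoc a]
  push_cast
  ring

theorem tsum_csigma_mul_dampedSine (s : ℂ) (ha : 0 < a) :
    ∑' n : ℕ, csigma s (n + 1) *
        (((√(n + 1 : ℕ))⁻¹ * dampedSine (a * √(n + 1 : ℕ)) : ℝ) : ℂ) =
      ∑' k : ℕ, ((k : ℂ) + 1) ^ (s - 1 / 2) * dampedSineSum (a * √((k : ℝ) + 1)) := by
  have hprod := (summable_rpow_mul_exp_neg_mul_sqrt (s - 1 / 2).re (half_pos ha)).mul_of_nonneg
    (summable_exp_neg_mul_sqrt (half_pos ha)) (fun _ ↦ by positivity) fun _ ↦ by positivity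
  have hsum : Summable fun p : ℕ × ℕ ↦ ((p.1 : ℂ) + 1) ^ s *
      (((√((p.1 + 1) * (p.2 + 1) : ℕ))⁻¹ *
        dampedSine (a * √((p.1 + 1) * (p.2 + 1) : ℕ)) : ℝ) : ℂ) := by
    refine hprod.of_norm_bounded fun p ↦ ?_
    rw [cpow_mul_inv_sqrt_mul_dampedSine, norm_mul, norm_natCast_add_one_cpow, norm_real]
    exact (mul_le_mul_of_nonneg_left (norm_inv_sqrt_mul_dampedSine_mul_le ha _ _)
      (by positivity)).trans_eq (mul_assoc _ _ _).symm
  rw [(hasSum_csigma_mul (h := fun n ↦ (((√n)⁻¹ * dampedSine (a * √n) : ℝ) : ℂ)) hsum).tsum_eq]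
  refine tsum_congr fun k ↦ ?_
  rw [tsum_congr (cpow_mul_inv_sqrt_mul_dampedSine s a k), tsum_mul_left, dampedSineSum,
    ofReal_tsum]

lemma cpow_mul_conjCpowSum_sub (ν : ℂ) (x : ℝ) (d m : ℕ) :
    ((d : ℂ) + 1) ^ (ν - 1 / 2) *
        (conjCpowSum ν x ((d + 1) * (m + 1) : ℕ) - conjCpowSum ν 0 ((d + 1) * (m + 1) : ℕ)) =
      ((d : ℂ) + 1) ^ (-(1 / 2) : ℂ) *
        (conjCpowSum ν (x / (d + 1)) (m + 1) - conjCpowSum ν 0 (m + 1)) := by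
  have hd : 0 < (d : ℝ) + 1 := by positivity
  have hx : x = ((d : ℝ) + 1) * (x / (d + 1)) := by field_simp
  have hscale (y : ℝ) : conjCpowSum ν (((d : ℝ) + 1) * y) ((d + 1) * (m + 1) : ℕ) =
      ((d : ℂ) + 1) ^ (-ν) * conjCpowSum ν y (m + 1) := by
    have h := conjCpowSum_mul hd ν y (m + 1)
    push_cast at h ⊢
    exact h
  have hzero := hscale 0
  rw [mul_zero] at hzero
  nth_rw 1 [hx]
  rw [hscale, hzero, ← mul_sub, ← mul_assoc, ← cpow_add _ _ d.cast_add_one_ne_zero]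
  ring_nf

lemma hasSum_csigma_mul_conjCpowSum_sub (hν : 0 < ν.re) (hx : 0 ≤ x) :
    HasSum (fun n : ℕ ↦ csigma (ν - 1 / 2) (n + 1) *
        (conjCpowSum ν x (n + 1 : ℕ) - conjCpowSum ν 0 (n + 1 : ℕ)))
      (∑' d : ℕ, ((d : ℂ) + 1) ^ (-(1 / 2) : ℂ) *
        ∑' m : ℕ, (conjCpowSum ν (x / (d + 1)) (m + 1) - conjCpowSum ν 0 (m + 1))) := by
  have hprod := (summable_add_one_rpow (a := -(3 / 2)) (by norm_num)).mul_of_nonneg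
    (summable_add_one_rpow (a := -(ν.re + 1)) (by linarith)) (fun _ ↦ by positivity)
    fun _ ↦ by positivity
  have hsum : Summable fun p : ℕ × ℕ ↦ ((p.1 : ℂ) + 1) ^ (ν - 1 / 2) *
      (conjCpowSum ν x ((p.1 + 1) * (p.2 + 1) : ℕ) -
        conjCpowSum ν 0 ((p.1 + 1) * (p.2 + 1) : ℕ)) := by
    refine (hprod.mul_left (2 * ‖ν‖ * Real.exp (π * |ν.im|) * x)).of_norm_bounded fun p ↦ ?_
    have hp : 0 < (p.1 : ℝ) + 1 := by positivity
    have hbound := norm_conjCpowSum_sub_le (ν := ν) (v := (p.2 : ℝ) + 1) (by linarith)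
      (div_nonneg hx hp.le) (by positivity)
    rw [cpow_mul_conjCpowSum_sub, norm_mul, norm_natCast_add_one_cpow,
      show (-(1 / 2) : ℂ).re = -(3 / 2) + 1 by norm_num, Real.rpow_add_one hp.ne']
    calc _ ≤ ((p.1 : ℝ) + 1) ^ (-(3 / 2) : ℝ) * (p.1 + 1) * _ :=
          mul_le_mul_of_nonneg_left hbound (by positivity)
      _ = _ := by field_simp
  convert hasSum_csigma_mul (h := fun n ↦ conjCpowSum ν x n - conjCpowSum ν 0 n) hsum using 3 with d
  rw [← tsum_mul_left]
  exact tsum_congr fun m ↦ (cpow_mul_conjCpowSum_sub ν x d m).symm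

lemma tsum_cpow_mul_polylogRemainder_of_re_pos (hν : 0 < ν.re) (hx : 0 < x) :
    ∑' d : ℕ, ((d : ℂ) + 1) ^ (-(1 / 2) : ℂ) * polylogRemainder ν (x / (d + 1)) =
      Gamma ν * (2 * π) ^ (-ν) * ∑' n : ℕ, csigma (ν - 1 / 2) (n + 1) *
        (conjCpowSum ν x (n + 1 : ℕ) - conjCpowSum ν 0 (n + 1 : ℕ)) := by
  rw [(hasSum_csigma_mul_conjCpowSum_sub hν hx.le).tsum_eq, ← tsum_mul_left]
  refine tsum_congr fun d ↦ ?_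
  rw [polylogRemainder_eq_of_re_pos hν (by positivity)]
  ring

end DivisorSums

section RamanujanFormula

lemma sum_range_add_tsum_ite {E : Type*} [AddCommGroup E] [TopologicalSpace E]
    [IsTopologicalAddGroup E] [T2Space E] {g : ℕ → E} (hg : Summable fun n ↦ g (n + 1)) (x : ℝ) :
    ∑ n ∈ range (⌈x⌉₊ + 1), (if 1 ≤ n ∧ (n : ℝ) < x then g n else 0) +
        ∑' n : ℕ, (if 1 ≤ n ∧ x ≤ (n : ℝ) then g n else 0) =
      ∑' n : ℕ, g (n + 1) := by
  have hall : HasSum (fun n ↦ if 1 ≤ n then g n else 0) (∑' n, g (n + 1)) := by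
    rw [← hasSum_nat_add_iff' 1]
    simpa using hg.hasSum
  have hsmall : HasSum (fun n : ℕ ↦ if 1 ≤ n ∧ (n : ℝ) < x then g n else 0)
      (∑ n ∈ range (⌈x⌉₊ + 1), if 1 ≤ n ∧ (n : ℝ) < x then g n else 0) := by
    refine hasSum_sum_of_ne_finset_zero fun n hn ↦ if_neg fun h ↦ hn ?_
    exact mem_range.2 ((Nat.lt_ceil.2 h.2).trans (Nat.lt_succ_self _))
  have hlarge : (fun n : ℕ ↦ if 1 ≤ n ∧ x ≤ (n : ℝ) then g n else 0) =
      fun n ↦ (if 1 ≤ n then g n else 0) - if 1 ≤ n ∧ (n : ℝ) < x then g n else 0 := by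
    funext n
    by_cases h₁ : 1 ≤ n <;> by_cases h₂ : (n : ℝ) < x <;> simp [h₁, h₂, not_le.2, not_lt.1]
  rw [hlarge, (hall.sub hsmall).tsum_eq, add_sub_cancel]

variable {n x : ℝ}

lemma cpow_neg_mul_neg_cos_add (ν : ℂ) (hn : 0 < n) (hx : 0 < x) :
    (n : ℂ) ^ (-ν) * (-Complex.cos (π * ν / 2) + (n : ℂ) ^ ν / (2 * (x : ℂ) ^ ν) *
        ((1 + I * n / x) ^ (-ν) + (1 - I * n / x) ^ (-ν))) =
      1 / 2 * (conjCpowSum ν x n - conjCpowSum ν 0 n) := by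
  have hscale := conjCpowSum_mul hx ν 1 (n / x)
  have hn' : (n : ℂ) ^ ν ≠ 0 := by simp [cpow_eq_zero_iff, hn.ne']
  rw [mul_one, mul_div_cancel₀ _ hx.ne', conjCpowSum.eq_def ν 1, ofReal_div, ofReal_one,
    ← mul_div_assoc] at hscale
  rw [hscale, conjCpowSum_zero_left ν hn, cpow_neg (n : ℂ), cpow_neg (x : ℂ)]
  field_simp
  ring

lemma mul_cpow_of_arg_add_arg_mem {z w : ℂ} (hz : z ≠ 0) (hw : w ≠ 0)
    (h : arg z + arg w ∈ Set.Ioc (-π) π) (c : ℂ) : (z * w) ^ c = z ^ c * w ^ c := by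
  rw [cpow_def_of_ne_zero (mul_ne_zero hz hw), cpow_def_of_ne_zero hz, cpow_def_of_ne_zero hw,
    (log_mul_eq_add_log_iff hz hw).2 h, add_mul, Complex.exp_add]

lemma I_mul_cpow {z : ℂ} (hz : 0 < z.re) (c : ℂ) : (I * z) ^ c = I ^ c * z ^ c := by
  have harg := abs_lt.1 (abs_arg_lt_pi_div_two_iff.2 (.inl hz))
  refine mul_cpow_of_arg_add_arg_mem I_ne_zero (by rintro rfl; simp at hz) ?_ c
  rw [arg_I]
  constructor <;> linarith [harg.1, harg.2]

lemma neg_I_mul_cpow {z : ℂ} (hz : 0 < z.re) (c : ℂ) : (-I * z) ^ c = (-I) ^ c * z ^ c := by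
  have harg := abs_lt.1 (abs_arg_lt_pi_div_two_iff.2 (.inl hz))
  refine mul_cpow_of_arg_add_arg_mem (neg_ne_zero.2 I_ne_zero) (by rintro rfl; simp at hz) ?_ c
  rw [arg_neg_I]
  constructor <;> linarith [harg.1, harg.2, Real.pi_pos]

lemma cos_mul_add_I_mul_sin_mul (ν : ℂ) (u : ℝ) :
    Complex.cos (π * ν / 2) * ((1 + I * u) ^ (-ν) + (1 - I * u) ^ (-ν) - 2) +
        I * Complex.sin (π * ν / 2) * ((1 + I * u) ^ (-ν) - (1 - I * u) ^ (-ν)) =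
      conjCpowSum ν u 1 - conjCpowSum ν 0 1 := by
  have hplus := neg_I_mul_cpow (z := 1 + I * u) (by simp) (-ν)
  have hminus := I_mul_cpow (z := 1 - I * u) (by simp) (-ν)
  rw [show -I * (1 + I * u) = u - I by linear_combination -(u : ℂ) * I_mul_I, neg_I_cpow,
    show -(π / 2 : ℂ) * I * -ν = (π * ν / 2) * I by ring, exp_mul_I] at hplus
  rw [show I * (1 - I * u) = u + I by linear_combination -(u : ℂ) * I_mul_I, I_cpow,
    show (π / 2 : ℂ) * I * -ν = (-(π * ν / 2)) * I by ring, exp_mul_I, Complex.cos_neg,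
    Complex.sin_neg] at hminus
  rw [conjCpowSum_zero_left ν one_pos, conjCpowSum, ofReal_one, mul_one, one_cpow, hplus, hminus]
  ring

lemma cpow_neg_mul_cos_mul_add_I_mul_sin_mul (ν : ℂ) (hn : 0 < n) (x : ℝ) :
    (n : ℂ) ^ (-ν) * (Complex.cos (π * ν / 2) *
          ((1 + I * x / n) ^ (-ν) + (1 - I * x / n) ^ (-ν) - 2) +
        I * Complex.sin (π * ν / 2) * ((1 + I * x / n) ^ (-ν) - (1 - I * x / n) ^ (-ν))) =
      conjCpowSum ν x n - conjCpowSum ν 0 n := by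
  have hscale (y : ℝ) := conjCpowSum_mul hn ν y 1
  have hx := hscale (x / n)
  have hzero := hscale 0
  rw [mul_div_cancel₀ _ hn.ne', mul_one] at hx
  rw [mul_zero, mul_one] at hzero
  rw [hx, hzero, ← mul_sub, ← cos_mul_add_I_mul_sin_mul, ofReal_div, ← mul_div_assoc]

lemma sum_add_half_tsum_csigma {s : ℂ} (hx : 0 < x)
    (hsum : Summable fun n : ℕ ↦ csigma s (n + 1) *
      (conjCpowSum (s + 1 / 2) x (n + 1 : ℕ) - conjCpowSum (s + 1 / 2) 0 (n + 1 : ℕ))) :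
    ((∑ n ∈ Finset.range (⌈x⌉₊ + 1), if 1 ≤ n ∧ (n : ℝ) < x then
            csigma s n * (n : ℂ) ^ (-s - 1 / 2) *
              (-Complex.sin ((π : ℂ) / 4 - (π : ℂ) * s / 2)
                + (n : ℂ) ^ (s + 1 / 2) / (2 * (x : ℂ) ^ (s + 1 / 2)) *
                  ((1 + Complex.I * (n : ℂ) / (x : ℂ)) ^ (-(s + 1 / 2)) +
                    (1 - Complex.I * (n : ℂ) / (x : ℂ)) ^ (-(s + 1 / 2))))
          else 0)
        + (1 / 2) * ∑' n : ℕ, if 1 ≤ n ∧ x ≤ (n : ℝ) then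
            csigma s n * (n : ℂ) ^ (-s - 1 / 2) *
              (Complex.cos ((π : ℂ) / 4 + (π : ℂ) * s / 2) *
                  ((1 + Complex.I * (x : ℂ) / (n : ℂ)) ^ (-(s + 1 / 2)) +
                    (1 - Complex.I * (x : ℂ) / (n : ℂ)) ^ (-(s + 1 / 2)) - 2)
                + Complex.I * Complex.sin ((π : ℂ) / 4 + (π : ℂ) * s / 2) *
                  ((1 + Complex.I * (x : ℂ) / (n : ℂ)) ^ (-(s + 1 / 2)) -
                    (1 - Complex.I * (x : ℂ) / (n : ℂ)) ^ (-(s + 1 / 2))))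
          else 0) =
      1 / 2 * ∑' n : ℕ, csigma s (n + 1) *
        (conjCpowSum (s + 1 / 2) x (n + 1 : ℕ) - conjCpowSum (s + 1 / 2) 0 (n + 1 : ℕ)) := by
  have hsin : Complex.sin (π / 4 - π * s / 2) = Complex.cos (π * (s + 1 / 2) / 2) := by
    rw [← Complex.cos_pi_div_two_sub]
    ring_nf
  have hangle : (π : ℂ) / 4 + π * s / 2 = π * (s + 1 / 2) / 2 := by ring
  rw [hsin, hangle, show -s - 1 / 2 = -(s + 1 / 2) by ring]
  have hsplit := sum_range_add_tsum_ite (g := fun n ↦ 1 / 2 * (csigma s n *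
    (conjCpowSum (s + 1 / 2) x n - conjCpowSum (s + 1 / 2) 0 n))) (hsum.mul_left (1 / 2)) x
  rw [← tsum_mul_left, ← tsum_mul_left, ← hsplit]
  congr 1
  · refine sum_congr rfl fun n _ ↦ ite_congr rfl (fun h ↦ ?_) fun _ ↦ rfl
    have hterm := cpow_neg_mul_neg_cos_add (s + 1 / 2) (Nat.cast_pos.2 h.1) hx
    rw [ofReal_natCast] at hterm
    rw [mul_assoc, hterm]
    ring
  · refine tsum_congr fun n ↦ ?_
    rw [mul_ite, mul_zero]
    refine ite_congr rfl (fun h ↦ ?_) fun _ ↦ rfl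
    have hterm := cpow_neg_mul_cos_mul_add_I_mul_sin_mul (s + 1 / 2) (Nat.cast_pos.2 h.1) x
    rw [ofReal_natCast] at hterm
    rw [mul_assoc (csigma s n), hterm]

lemma two_pi_cpow_neg (s : ℂ) :
    (2 * π : ℂ) ^ (-(s + 1 / 2)) = ((2 : ℂ) ^ s * √2 * (π : ℂ) ^ (s + 1 / 2))⁻¹ := by
  have hmul := ofReal_mul_cpow two_pos (π : ℂ) (s + 1 / 2)
  have hsqrt := ofReal_cpow_half (r := 2) (by norm_num)
  push_cast at hmul hsqrt
  rw [cpow_neg, hmul, cpow_add _ _ two_ne_zero, hsqrt]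

lemma eq_add_of_sqrt_two_mul_eq (s : ℂ) (hx : 0 < x) {L T G W Z : ℂ}
    (h : G * (2 * π) ^ (-(s + 1 / 2)) * T +
        G * (2 * π) ^ (-(s + 1 / 2)) * (x : ℂ) ^ (-(s + 1 / 2)) * W + Z =
      √2 * L - dampedSineFrequency x * W) :
    L = 4 * π * (√x / 2 * W + Z / (4 * π * √2) +
        G * W / ((2 : ℂ) ^ (s + 3) * (π : ℂ) ^ (s + 3 / 2) * (x : ℂ) ^ (s + 1 / 2))) +
      G / ((2 : ℂ) ^ s * (π : ℂ) ^ (s + 1 / 2)) * (1 / 2 * T) := by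
  have hpi : (π : ℂ) ≠ 0 := ofReal_ne_zero.2 Real.pi_ne_zero
  have htwo_add : (2 : ℂ) ^ (s + 3) = 8 * (2 : ℂ) ^ s := by
    rw [cpow_add _ _ two_ne_zero]
    norm_num [mul_comm]
  have hpi_add : (π : ℂ) ^ (s + 3 / 2) = π * (π : ℂ) ^ (s + 1 / 2) := by
    rw [show s + 3 / 2 = s + 1 / 2 + 1 by ring, cpow_add _ _ hpi, cpow_one, mul_comm]
  have hsq : (√2 : ℂ) ^ 2 = 2 := by exact_mod_cast Real.sq_sqrt zero_le_two
  have hsqrt : (√2 : ℂ) ≠ 0 := by simp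
  have htwo_cpow : (2 : ℂ) ^ s ≠ 0 := by simp [cpow_eq_zero_iff]
  have hpi_cpow : (π : ℂ) ^ (s + 1 / 2) ≠ 0 := by simp [cpow_eq_zero_iff, hpi]
  have hx_cpow : (x : ℂ) ^ (s + 1 / 2) ≠ 0 := by simp [cpow_eq_zero_iff, hx.ne']
  rw [dampedSineFrequency, Real.sqrt_mul zero_le_two, two_pi_cpow_neg, cpow_neg] at h
  rw [htwo_add, hpi_add]
  generalize (2 : ℂ) ^ s = A, (π : ℂ) ^ (s + 1 / 2) = B, (x : ℂ) ^ (s + 1 / 2) = C at *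
  push_cast at h
  field_simp at h ⊢
  rw [hsq] at h
  linear_combination -8 * √2 * h + 8 * A * B * C * Z * hsq

lemma csigma_mul_exp_mul_sin_eq (s : ℂ) (x : ℝ) (n : ℕ) :
    csigma s (n + 1) * ((Real.sqrt ((n : ℝ) + 1) : ℝ) : ℂ)⁻¹ *
        ((Real.exp (-(2 * π * Real.sqrt (2 * ((n : ℝ) + 1) * x))) : ℝ) : ℂ) *
        ((Real.sin (π / 4 - 2 * π * Real.sqrt (2 * ((n : ℝ) + 1) * x)) : ℝ) : ℂ) =
      csigma s (n + 1) * (((√(n + 1 : ℕ))⁻¹ *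
        dampedSine (dampedSineFrequency x * √(n + 1 : ℕ)) : ℝ) : ℂ) := by
  have hfreq : dampedSineFrequency x * √(n + 1 : ℕ) = 2 * π * √(2 * ((n : ℝ) + 1) * x) := by
    rw [dampedSineFrequency, mul_assoc, ← Real.sqrt_mul' _ (Nat.cast_nonneg _)]
    push_cast
    ring_nf
  rw [hfreq, dampedSine]
  push_cast
  ring

theorem ramanujan_p336_companion_general
    (s : ℂ) (hs : -1 / 2 < s.re) (x : ℝ) (hx : 0 < x) :
    (∑' n : ℕ, csigma s (n + 1) * ((Real.sqrt ((n : ℝ) + 1) : ℝ) : ℂ)⁻¹ *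
        ((Real.exp (-(2 * π * Real.sqrt (2 * ((n : ℝ) + 1) * x))) : ℝ) : ℂ) *
        ((Real.sin (π / 4 - 2 * π * Real.sqrt (2 * ((n : ℝ) + 1) * x)) : ℝ) : ℂ))
    = 4 * (π : ℂ) *
        ((Real.sqrt x : ℂ) / 2 * riemannZeta (-s)
          + riemannZeta (1 / 2) * riemannZeta (1 / 2 - s) / (4 * (π : ℂ) * (Real.sqrt 2 : ℂ))
          + Complex.Gamma (s + 1 / 2) * riemannZeta (-s) /
              ((2 : ℂ) ^ (s + 3) * (π : ℂ) ^ (s + 3 / 2) * (x : ℂ) ^ (s + 1 / 2)))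
      + Complex.Gamma (s + 1 / 2) / ((2 : ℂ) ^ s * (π : ℂ) ^ (s + 1 / 2)) *
        ((∑ n ∈ Finset.range (⌈x⌉₊ + 1), if 1 ≤ n ∧ (n : ℝ) < x then
            csigma s n * (n : ℂ) ^ (-s - 1 / 2) *
              (-Complex.sin ((π : ℂ) / 4 - (π : ℂ) * s / 2)
                + (n : ℂ) ^ (s + 1 / 2) / (2 * (x : ℂ) ^ (s + 1 / 2)) *
                  ((1 + Complex.I * (n : ℂ) / (x : ℂ)) ^ (-(s + 1 / 2)) +
                    (1 - Complex.I * (n : ℂ) / (x : ℂ)) ^ (-(s + 1 / 2))))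
          else 0)
        + (1 / 2) * ∑' n : ℕ, if 1 ≤ n ∧ x ≤ (n : ℝ) then
            csigma s n * (n : ℂ) ^ (-s - 1 / 2) *
              (Complex.cos ((π : ℂ) / 4 + (π : ℂ) * s / 2) *
                  ((1 + Complex.I * (x : ℂ) / (n : ℂ)) ^ (-(s + 1 / 2)) +
                    (1 - Complex.I * (x : ℂ) / (n : ℂ)) ^ (-(s + 1 / 2)) - 2)
                + Complex.I * Complex.sin ((π : ℂ) / 4 + (π : ℂ) * s / 2) *
                  ((1 + Complex.I * (x : ℂ) / (n : ℂ)) ^ (-(s + 1 / 2)) -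
                    (1 - Complex.I * (x : ℂ) / (n : ℂ)) ^ (-(s + 1 / 2))))
          else 0) := by
  have hν : 0 < (s + 1 / 2).re := by norm_num; linarith
  have hreciprocity := tsum_polylogRemainder_add (.inl hν) hx
  have hsum := (hasSum_csigma_mul_conjCpowSum_sub hν hx.le).summable
  rw [tsum_cpow_mul_polylogRemainder_of_re_pos hν hx, add_sub_cancel_right,
    show 1 / 2 - (s + 1 / 2) = -s by ring, show 1 - (s + 1 / 2) = 1 / 2 - s by ring,
    show s + 1 / 2 - 1 = s - 1 / 2 by ring,
    ← tsum_csigma_mul_dampedSine s (dampedSineFrequency_pos hx)] at hreciprocity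
  rw [add_sub_cancel_right] at hsum
  rw [tsum_congr (csigma_mul_exp_mul_sin_eq s x), sum_add_half_tsum_csigma hx hsum]
  exact eq_add_of_sqrt_two_mul_eq s hx hreciprocity

end RamanujanFormula

theorem ramanujan_p336_companion
    (s : ℂ) (hs : 0 < s.re) (x : ℝ) (hx : 0 < x) :
    (∑' n : ℕ, csigma s (n + 1) * ((Real.sqrt ((n : ℝ) + 1) : ℝ) : ℂ)⁻¹ *
        ((Real.exp (-(2 * π * Real.sqrt (2 * ((n : ℝ) + 1) * x))) : ℝ) : ℂ) *
        ((Real.sin (π / 4 - 2 * π * Real.sqrt (2 * ((n : ℝ) + 1) * x)) : ℝ) : ℂ))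
    = 4 * (π : ℂ) *
        ((Real.sqrt x : ℂ) / 2 * riemannZeta (-s)
          + riemannZeta (1 / 2) * riemannZeta (1 / 2 - s) / (4 * (π : ℂ) * (Real.sqrt 2 : ℂ))
          + Complex.Gamma (s + 1 / 2) * riemannZeta (-s) /
              ((2 : ℂ) ^ (s + 3) * (π : ℂ) ^ (s + 3 / 2) * (x : ℂ) ^ (s + 1 / 2)))
      + Complex.Gamma (s + 1 / 2) / ((2 : ℂ) ^ s * (π : ℂ) ^ (s + 1 / 2)) *
        ((∑ n ∈ Finset.range (⌈x⌉₊ + 1), if 1 ≤ n ∧ (n : ℝ) < x then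
            csigma s n * (n : ℂ) ^ (-s - 1 / 2) *
              (-Complex.sin ((π : ℂ) / 4 - (π : ℂ) * s / 2)
                + (n : ℂ) ^ (s + 1 / 2) / (2 * (x : ℂ) ^ (s + 1 / 2)) *
                  ((1 + Complex.I * (n : ℂ) / (x : ℂ)) ^ (-(s + 1 / 2)) +
                    (1 - Complex.I * (n : ℂ) / (x : ℂ)) ^ (-(s + 1 / 2))))
          else 0)
        + (1 / 2) * ∑' n : ℕ, if 1 ≤ n ∧ x ≤ (n : ℝ) then
            csigma s n * (n : ℂ) ^ (-s - 1 / 2) *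
              (Complex.cos ((π : ℂ) / 4 + (π : ℂ) * s / 2) *
                  ((1 + Complex.I * (x : ℂ) / (n : ℂ)) ^ (-(s + 1 / 2)) +
                    (1 - Complex.I * (x : ℂ) / (n : ℂ)) ^ (-(s + 1 / 2)) - 2)
                + Complex.I * Complex.sin ((π : ℂ) / 4 + (π : ℂ) * s / 2) *
                  ((1 + Complex.I * (x : ℂ) / (n : ℂ)) ^ (-(s + 1 / 2)) -
                    (1 - Complex.I * (x : ℂ) / (n : ℂ)) ^ (-(s + 1 / 2))))
          else 0) := by
  exact ramanujan_p336_companion_general s (by linarith) x hx
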